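/- The following are equivalent for a length space X: (1) X is quasi-isometric to a cactus; (2) X is quasi-isometric to an outerplanar graph; (3) X has neither K₄ nor K_{2,3} as an asymptotic minor; (4) there is a subdivision Θ' of Θ (the graph obtained from K₄ by removing one edge) such that X does not have Θ' as an asymptotic minor. -/

import Mathlib

/-!
The implications from a cactus to an outerplanar graph, from an outerplanar graph to the absence of
fat minors, and from there to a missing subdivision of `Θ` are soft. A `K₄` or `K_{2,3}` minor in a
cactus yields two distinct cycles sharing an edge (`IsCactus.isOuterplanar`). If `X` is
quasi-isometric to a connected graph `G`, then thickening the images of the branch sets and branch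
paths of a sufficiently fat minor of `X` gives a minor of `G` (`isGraphMinor_of_fat`). Finally
`K_{2,3}` itself is a subdivision of `Θ` (`isSubdivisionOf_bipartite`).

The substance is that a length space `X` without a `K`-fat `Θ'`-minor, for one subdivision `Θ'` of
`Θ` and one `K`, is quasi-isometric to a cactus. A subdivision of `Θ` consists of three threads
between two vertices (`exists_thetaThreads`). Suppose that three points at about the same distance
`n` from a point `o` are pairwise far apart and are joined by a connected set `T` that stays at
distance about `n` or more from `o`. Then almost geodesics from `o` to the three points, with their
long final parts cut into segments, contain a `K`-fat `Θ'`-minor, in which `T` and the union of the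
initial parts of the legs are the two branch sets of degree three (`exists_fat_theta`). So no such
configuration exists. This is transferred to the unit graph of `X`, which joins points at distance
at most `1` and has distances within `1` of those of `X`; it has the tripod property
`Layer.Tripod`: among any three vertices of a sphere about any vertex `o` which are connected to each
other outside the open ball, two are at distance less than `L`.

For a connected graph with the tripod property, fix a root `o` and call the classes of vertices of
the sphere of radius `n` about `o` that are connected outside the open ball of radius `n` the
clusters. These form a tree. A cluster of diameter at most `M`, where `M` is much larger than `L`, is
contracted to one vertex; any other cluster splits into two pieces of diameter less than `L`, far
apart from each other, which are contracted separately. All contracted sets have diameter at most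
`M`, so the resulting graph is quasi-isometric to the given one (`Layer.exists_cactus`). It is a
cactus for two reasons. First, a piece of a split cluster has neighbours in only one piece of the cluster below.
Second, at most one child cluster is attached to both pieces of a split cluster
(`Layer.rel_of_link`): two different ones would, together with the route through the root, give three
routes between the pieces, and hence three points violating the tripod property for spheres about a
vertex of one of the pieces. Thus at most two edges go down from a cluster, every cycle using one of
them uses both, and a cycle is determined by any one of its edges (`ClusterTree.isCactus`).
-/

/-- An `(M,A)`-quasi-isometry between two types equipped with distance functions. -/
def IsQuasiIsometry {X Y : Type*} (dX : X → X → ℝ) (dY : Y → Y → ℝ)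
    (M A : ℝ) (f : X → Y) : Prop :=
  1 ≤ M ∧ 0 ≤ A ∧
  (∀ x y, M⁻¹ * dX x y - A ≤ dY (f x) (f y)) ∧
  (∀ x y, dY (f x) (f y) ≤ M * dX x y + A) ∧
  (∀ z : Y, ∃ x : X, dY z (f x) ≤ A)

/-- Two distance spaces are quasi-isometric if some `(M,A)`-quasi-isometry exists. -/
def QuasiIsometric {X Y : Type*} (dX : X → X → ℝ) (dY : Y → Y → ℝ) : Prop :=
  ∃ M A f, IsQuasiIsometry dX dY M A f

/-- The graph distance of a simple graph, as a real-valued distance. -/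
noncomputable def graphDist {V : Type*} (G : SimpleGraph V) (u v : V) : ℝ := (G.dist u v : ℝ)
/-- A metric space is a length space if any two points are joined by paths of length
arbitrarily close to their distance. -/
def IsLengthSpace (X : Type*) [MetricSpace X] : Prop :=
  ∀ x y : X, ∀ ε : ℝ, 0 < ε → ∃ p : Path x y,
    eVariationOn (fun t => p t) Set.univ ≤ ENNReal.ofReal (dist x y + ε)
/-- `S` is an arc from `a` to `b`: the image of an injective path. -/
def IsArcIn {X : Type*} [TopologicalSpace X] (S : Set X) (a b : X) : Prop :=
  ∃ p : Path a b, Function.Injective (fun t => p t) ∧ Set.range (fun t => p t) = S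

/-- A metric space `X` has the graph `H` as a `K`-fat minor: there are pairwise disjoint
connected branch sets `B v` and pairwise disjoint branch arcs `P e`, each branch arc meeting
the union of the branch sets exactly at its two endpoints (lying in the branch sets of the
endvertices of the corresponding edge), such that any two of these sets are at distance
at least `K` unless they are equal or an incident branch set/branch arc pair. -/
def HasMetricFatMinor {W : Type*} (H : SimpleGraph W) (X : Type*) [MetricSpace X]
    (K : ℝ) : Prop :=
  ∃ (B : W → Set X) (P : Sym2 W → Set X),
    (∀ v, IsConnected (B v)) ∧
    (∀ v v', v ≠ v' → Disjoint (B v) (B v')) ∧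
    (∀ u w, H.Adj u w → ∃ a ∈ B u, ∃ b ∈ B w,
        IsArcIn (P s(u, w)) a b ∧ P s(u, w) ∩ (⋃ v, B v) = {a, b}) ∧
    (∀ e ∈ H.edgeSet, ∀ e' ∈ H.edgeSet, e ≠ e' → Disjoint (P e) (P e')) ∧
    (∀ v v', v ≠ v' → ∀ x ∈ B v, ∀ y ∈ B v', K ≤ dist x y) ∧
    (∀ e ∈ H.edgeSet, ∀ e' ∈ H.edgeSet, e ≠ e' → ∀ x ∈ P e, ∀ y ∈ P e', K ≤ dist x y) ∧
    (∀ u w, H.Adj u w → ∀ v, v ≠ u → v ≠ w → ∀ x ∈ P s(u, w), ∀ y ∈ B v, K ≤ dist x y)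

/-- `X` has `H` as an asymptotic minor if it has a `K`-fat `H`-minor for every `K > 0`. -/
def HasAsymptoticMinor {W : Type*} (H : SimpleGraph W) (X : Type*) [MetricSpace X] : Prop :=
  ∀ K : ℝ, 0 < K → HasMetricFatMinor H X K
/-- `H` is a minor of `G`: there are pairwise disjoint branch sets in `G`, one for each
vertex of `H`, inducing connected subgraphs, such that branch sets of adjacent vertices
of `H` are joined by an edge of `G`. -/
def IsGraphMinor {W V : Type*} (H : SimpleGraph W) (G : SimpleGraph V) : Prop :=
  ∃ B : W → Set V,
    (∀ w, (G.induce (B w)).Connected) ∧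
    (∀ v v', v ≠ v' → Disjoint (B v) (B v')) ∧
    (∀ u w, H.Adj u w → ∃ a ∈ B u, ∃ b ∈ B w, G.Adj a b)
/-- `Δ'` is a subdivision of `Δ`: `Δ'` is obtained from `Δ` by replacing the edges of `Δ`
by internally disjoint paths between the (injectively embedded) branch vertices, these
paths avoiding branch vertices internally and covering all vertices and edges of `Δ'`. -/
def IsSubdivisionOf {W' W : Type*} (Δ' : SimpleGraph W') (Δ : SimpleGraph W) : Prop :=
  ∃ (φ : W → W') (P : ∀ u v : W, Δ.Adj u v → Δ'.Walk (φ u) (φ v)),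
    Function.Injective φ ∧
    (∀ u v (h : Δ.Adj u v), (P u v h).IsPath) ∧
    (∀ u v (h : Δ.Adj u v), (P v u h.symm).support = (P u v h).support.reverse) ∧
    (∀ u v (h : Δ.Adj u v), ∀ w, w ∈ (P u v h).support → w ∈ Set.range φ →
      w = φ u ∨ w = φ v) ∧
    (∀ u v u' v' (h : Δ.Adj u v) (h' : Δ.Adj u' v'), s(u, v) ≠ s(u', v') →
      ∀ w, w ∈ (P u v h).support → w ∈ (P u' v' h').support →
        ((w = φ u ∨ w = φ v) ∧ (w = φ u' ∨ w = φ v'))) ∧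
    (∀ w : W', w ∈ Set.range φ ∨ ∃ u, ∃ v, ∃ h : Δ.Adj u v, w ∈ (P u v h).support) ∧
    (∀ e ∈ Δ'.edgeSet, ∃ u, ∃ v, ∃ h : Δ.Adj u v, e ∈ (P u v h).edges)

/-- A cactus is a connected graph in which any two (distinct) cycles share at most one
vertex. -/
def IsCactus {V : Type*} (G : SimpleGraph V) : Prop :=
  G.Connected ∧ ∀ (a b : V) (c₁ : G.Walk a a) (c₂ : G.Walk b b),
    c₁.IsCycle → c₂.IsCycle → {e : Sym2 V | e ∈ c₁.edges} ≠ {e : Sym2 V | e ∈ c₂.edges} →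
    Set.Subsingleton {v : V | v ∈ c₁.support ∧ v ∈ c₂.support}

/-- A graph is outerplanar iff it has no `K₄` minor and no `K_{2,3}` minor. -/
def IsOuterplanar {V : Type*} (G : SimpleGraph V) : Prop :=
  ¬ IsGraphMinor (⊤ : SimpleGraph (Fin 4)) G ∧
  ¬ IsGraphMinor (completeBipartiteGraph (Fin 2) (Fin 3)) G

/-- `Θ`: the graph obtained from `K₄` by removing one edge. -/
def thetaGraph : SimpleGraph (Fin 4) :=
  (⊤ : SimpleGraph (Fin 4)).deleteEdges {s((0 : Fin 4), (1 : Fin 4))}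

/-! ### Cacti are outerplanar -/

section Cactus

open SimpleGraph

variable {V : Type*} {G : SimpleGraph V}

lemma reachable_of_induce {S : Set V} (hS : (G.induce S).Connected) (H : SimpleGraph V)
    (hH : ∀ x y, x ∈ S → y ∈ S → G.Adj x y → H.Adj x y) {u v : V} (hu : u ∈ S) (hv : v ∈ S) :
    H.Reachable u v := by
  let φ : G.induce S →g H :=
    { toFun := Subtype.val
      map_rel' := fun {a b} h => hH a b a.2 b.2 h }
  exact (hS.preconnected ⟨u, hu⟩ ⟨v, hv⟩).map φ

/-- The union of two connected sets of vertices joined by an edge is connected. -/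
lemma induce_union_of_adj {S T : Set V} (hS : (G.induce S).Connected) (hT : (G.induce T).Connected)
    {s t : V} (hs : s ∈ S) (ht : t ∈ T) (hst : G.Adj s t) : (G.induce (S ∪ T)).Connected := by
  let s' : ↥(S ∪ T) := ⟨s, Or.inl hs⟩
  have key : ∀ x : ↥(S ∪ T), (G.induce (S ∪ T)).Reachable x s' := by
    have h1 : ∀ x : ↥(S ∪ T), x.1 ∈ S → (G.induce (S ∪ T)).Reachable x s' := fun x hx =>
      (hS.preconnected ⟨x, hx⟩ ⟨s, hs⟩).map (G.induceHomOfLE Set.subset_union_left).toHom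
    have h2 : ∀ x : ↥(S ∪ T), x.1 ∈ T → (G.induce (S ∪ T)).Reachable x ⟨t, Or.inr ht⟩ :=
      fun x hx =>
        (hT.preconnected ⟨x, hx⟩ ⟨t, ht⟩).map (G.induceHomOfLE Set.subset_union_right).toHom
    have h3 : (G.induce (S ∪ T)).Adj ⟨t, Or.inr ht⟩ s' := hst.symm
    intro x
    rcases x.2 with hx | hx
    · exact h1 x hx
    · exact (h2 x hx).trans h3.reachable
  have : Nonempty ↥(S ∪ T) := ⟨s'⟩
  exact Connected.mk fun x y => (key x).trans (key y).symm

/-- An edge `ab` between connected sets `A`, `B` and a connected set `C` adjacent to both lie on a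
common cycle inside `A ∪ B ∪ C`. -/
lemma exists_cycle_through {A B C : Set V} (hA : (G.induce A).Connected)
    (hB : (G.induce B).Connected) (hC : (G.induce C).Connected)
    (hAB : Disjoint A B) (hAC : Disjoint A C) (hBC : Disjoint B C)
    {a b : V} (ha : a ∈ A) (hb : b ∈ B) (hab : G.Adj a b)
    (hAC' : ∃ x ∈ A, ∃ y ∈ C, G.Adj x y) (hBC' : ∃ x ∈ B, ∃ y ∈ C, G.Adj x y) :
    ∃ c : G.Walk a a, c.IsCycle ∧ b ∈ c.support ∧ (∀ x ∈ c.support, x ∈ A ∪ B ∪ C) ∧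
      ∃ z ∈ c.support, z ∈ C := by
  rw [Set.disjoint_left] at hAB hAC hBC
  let H : SimpleGraph V :=
    { Adj := fun x y => G.Adj x y ∧ x ∈ A ∪ B ∪ C ∧ y ∈ A ∪ B ∪ C ∧ ¬ (x ∈ A ∧ y ∈ B) ∧
        ¬ (x ∈ B ∧ y ∈ A)
      symm := ⟨fun x y h => ⟨h.1.symm, h.2.2.1, h.2.1, fun h' => h.2.2.2.2 ⟨h'.2, h'.1⟩,
        fun h' => h.2.2.2.1 ⟨h'.2, h'.1⟩⟩⟩
      loopless := ⟨fun x h => G.loopless.irrefl x h.1⟩ }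
  have hHG : H ≤ G := fun x y h => h.1
  obtain ⟨x, hx, y, hy, hxy⟩ := hAC'
  obtain ⟨x', hx', y', hy', hxy'⟩ := hBC'
  have r1 : H.Reachable b x' := reachable_of_induce hB H (fun u v hu hv h =>
    ⟨h, by simp [hu], by simp [hv], fun h' => hAB h'.1 hu, fun h' => hAB h'.2 hv⟩) hb hx'
  have r2 : H.Adj x' y' := ⟨hxy', by simp [hx'], by simp [hy'], fun h' => hAB h'.1 hx',
    fun h' => hAC h'.2 hy'⟩
  have r3 : H.Reachable y' y := reachable_of_induce hC H (fun u v hu hv h =>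
    ⟨h, by simp [hu], by simp [hv], fun h' => hAC h'.1 hu, fun h' => hAC h'.2 hv⟩) hy' hy
  have r4 : H.Adj y x := ⟨hxy.symm, by simp [hy], by simp [hx], fun h' => hAC h'.1 hy,
    fun h' => hBC h'.1 hy⟩
  have r5 : H.Reachable x a := reachable_of_induce hA H (fun u v hu hv h =>
    ⟨h, by simp [hu], by simp [hv], fun h' => hAB hv h'.2, fun h' => hAB hu h'.1⟩) hx ha
  obtain ⟨p, hp⟩ := (r1.trans (r2.reachable.trans (r3.trans (r4.reachable.trans r5)))).exists_isPath
  have hsup : ∀ z ∈ p.support, z ∈ A ∪ B ∪ C := by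
    intro z hz
    by_cases hzb : z = b
    · simp [hzb, hb]
    · have hnil : ¬ p.Nil := fun h => hAB ha (h.eq ▸ hb)
      rw [Walk.mem_support_iff_exists_mem_edges_of_not_nil hnil] at hz
      obtain ⟨e, he, hze⟩ := hz
      have := p.edges_subset_edgeSet he
      revert this hze
      induction e with | _ s t => ?_
      intro hze hst
      have hst : H.Adj s t := hst
      rcases Sym2.mem_iff.1 hze with rfl | rfl
      · exact hst.2.1
      · exact hst.2.2.1
  refine ⟨Walk.cons hab (p.mapLe hHG), ?_, ?_, ?_, ?_⟩
  · rw [Walk.cons_isCycle_iff]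
    refine ⟨hp.mapLe hHG, ?_⟩
    rw [Walk.edges_mapLe_eq_edges]
    intro he
    have : H.Adj a b := p.edges_subset_edgeSet he
    exact this.2.2.2.1 ⟨ha, hb⟩
  · simp
  · intro z hz
    rw [Walk.support_cons, List.mem_cons, Walk.support_mapLe_eq_support] at hz
    rcases hz with rfl | hz
    · simp [ha]
    · exact hsup z hz
  · obtain ⟨d, hd, hd1, hd2⟩ := p.exists_boundary_dart B hb (hAB ha)
    refine ⟨d.snd, ?_, ?_⟩
    · rw [Walk.support_cons, List.mem_cons, Walk.support_mapLe_eq_support]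
      exact Or.inr (p.dart_snd_mem_support_of_mem_darts hd)
    · have := d.adj
      rcases this.2.2.1 with (h | h) | h
      · exact absurd ⟨hd1, h⟩ this.2.2.2.2
      · exact absurd h hd2
      · exact h

/-- In a cactus, an edge between two connected sets cannot have two disjoint connected sets
attached to both its sides: these would create two cycles sharing this edge. -/
lemma IsCactus.no_double_handle (hG : IsCactus G) {A B C D : Set V}
    (hA : (G.induce A).Connected) (hB : (G.induce B).Connected) (hC : (G.induce C).Connected)
    (hD : (G.induce D).Connected) (hAB : Disjoint A B) (hAC : Disjoint A C) (hBC : Disjoint B C)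
    (hAD : Disjoint A D) (hBD : Disjoint B D) (hCD : Disjoint C D)
    (hAB' : ∃ x ∈ A, ∃ y ∈ B, G.Adj x y)
    (hAC' : ∃ x ∈ A, ∃ y ∈ C, G.Adj x y) (hBC' : ∃ x ∈ B, ∃ y ∈ C, G.Adj x y)
    (hAD' : ∃ x ∈ A, ∃ y ∈ D, G.Adj x y) (hBD' : ∃ x ∈ B, ∃ y ∈ D, G.Adj x y) : False := by
  obtain ⟨a, ha, b, hb, hab⟩ := hAB'
  obtain ⟨c, hc, hbc, -, z, hz, hzC⟩ :=
    exists_cycle_through hA hB hC hAB hAC hBC ha hb hab hAC' hBC'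
  obtain ⟨d, hd, hbd, hsup, -⟩ :=
    exists_cycle_through hA hB hD hAB hAD hBD ha hb hab hAD' hBD'
  have hne : {e : Sym2 V | e ∈ c.edges} ≠ {e : Sym2 V | e ∈ d.edges} := by
    intro heq
    obtain ⟨e, he, hze⟩ := (Walk.mem_support_iff_exists_mem_edges_of_not_nil hc.not_nil).1 hz
    have he' : e ∈ d.edges := by
      have : e ∈ {e : Sym2 V | e ∈ c.edges} := he
      rw [heq] at this
      exact this
    have hzd : z ∈ d.support :=
      (Walk.mem_support_iff_exists_mem_edges_of_not_nil hd.not_nil).2 ⟨e, he', hze⟩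
    rw [Set.disjoint_left] at hAC hBC hCD
    rcases hsup z hzd with (h | h) | h
    · exact hAC h hzC
    · exact hBC h hzC
    · exact hCD hzC h
  exact hab.ne (hG.2 a a c d hc hd hne ⟨c.start_mem_support, d.start_mem_support⟩ ⟨hbc, hbd⟩)

/-- Cacti have neither a `K₄` nor a `K_{2,3}` minor. -/
theorem IsCactus.isOuterplanar (hG : IsCactus G) : IsOuterplanar G := by
  have swap : ∀ {S T : Set V}, (∃ x ∈ S, ∃ y ∈ T, G.Adj x y) → ∃ x ∈ T, ∃ y ∈ S, G.Adj x y :=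
    fun ⟨x, hx, y, hy, h⟩ => ⟨y, hy, x, hx, h.symm⟩
  constructor
  · rintro ⟨B, hB, hdisj, hadj⟩
    exact hG.no_double_handle (hB 0) (hB 1) (hB 2) (hB 3) (hdisj _ _ (by decide))
      (hdisj _ _ (by decide)) (hdisj _ _ (by decide)) (hdisj _ _ (by decide))
      (hdisj _ _ (by decide)) (hdisj _ _ (by decide)) (hadj _ _ (by decide))
      (hadj _ _ (by decide)) (hadj _ _ (by decide)) (hadj _ _ (by decide)) (hadj _ _ (by decide))
  · rintro ⟨B, hB, hdisj, hadj⟩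
    have hadj' : ∀ i j, ∃ x ∈ B (Sum.inl i), ∃ y ∈ B (Sum.inr j), G.Adj x y :=
      fun i j => hadj _ _ (by simp)
    obtain ⟨s, hs, t, ht, hst⟩ := hadj' 0 2
    refine hG.no_double_handle (A := B (Sum.inl 0) ∪ B (Sum.inr 2)) (B := B (Sum.inl 1))
      (C := B (Sum.inr 0)) (D := B (Sum.inr 1))
      (induce_union_of_adj (hB _) (hB _) hs ht hst) (hB _) (hB _) (hB _)
      (Set.disjoint_union_left.2 ⟨hdisj _ _ (by decide), hdisj _ _ (by decide)⟩)
      (Set.disjoint_union_left.2 ⟨hdisj _ _ (by decide), hdisj _ _ (by decide)⟩)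
      (hdisj _ _ (by decide))
      (Set.disjoint_union_left.2 ⟨hdisj _ _ (by decide), hdisj _ _ (by decide)⟩)
      (hdisj _ _ (by decide)) (hdisj _ _ (by decide)) ?_ ?_ (hadj' _ _) ?_ (hadj' _ _)
    · obtain ⟨x, hx, y, hy, h⟩ := swap (hadj' 1 2)
      exact ⟨x, Or.inr hx, y, hy, h⟩
    · obtain ⟨x, hx, y, hy, h⟩ := hadj' 0 0
      exact ⟨x, Or.inl hx, y, hy, h⟩
    · obtain ⟨x, hx, y, hy, h⟩ := hadj' 0 1
      exact ⟨x, Or.inl hx, y, hy, h⟩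

end Cactus

/-! ### Fat minors descend along quasi-isometries to minors of graphs -/

section FatToMinor

open SimpleGraph hiding dist dist_comm
open Topology

variable {X V : Type*} [MetricSpace X] {G : SimpleGraph V}

/-- The set of vertices within distance `r` of the image of `S` under `f`. -/
def fnbhd (G : SimpleGraph V) (f : X → V) (r : ℕ) (S : Set X) : Set V :=
  {v | ∃ x ∈ S, G.dist (f x) v ≤ r}

lemma dist_le_of_mem_support {u v w : V} (p : G.Walk u v) (hw : w ∈ p.support) :
    G.dist u w ≤ p.length :=
  by classical exact (SimpleGraph.dist_le _).trans (p.length_takeUntil_le_length hw)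

lemma fnbhd_connected (hG : G.Connected) {f : X → V} {r : ℕ}
    (hf : ∀ x y, dist x y < 1 → G.dist (f x) (f y) ≤ r) {S : Set X} (hS : IsConnected S) :
    (G.induce (fnbhd G f r S)).Connected := by
  obtain ⟨x₀, hx₀⟩ := hS.nonempty
  have hmem : ∀ x ∈ S, f x ∈ fnbhd G f r S := fun x hx => ⟨x, hx, by simp⟩
  -- a point of the neighbourhood reaches the image of `S` along a geodesic
  have step : ∀ x (hx : x ∈ S) v (hv : G.dist (f x) v ≤ r),
      (G.induce (fnbhd G f r S)).Reachable ⟨f x, hmem x hx⟩ ⟨v, x, hx, hv⟩ := by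
    intro x hx v hv
    obtain ⟨p, hp⟩ := hG.exists_walk_length_eq_dist (f x) v
    have hsup : ∀ w ∈ p.support, w ∈ fnbhd G f r S := fun w hw =>
      ⟨x, hx, (dist_le_of_mem_support p hw).trans (hp.le.trans hv)⟩
    exact ⟨p.induce _ hsup⟩
  let Q : X → X → Prop := fun x y => ∀ (hx : x ∈ S) (hy : y ∈ S),
    (G.induce (fnbhd G f r S)).Reachable ⟨f x, hmem x hx⟩ ⟨f y, hmem y hy⟩
  have key : ∀ x ∈ S, ∀ y ∈ S, Q x y := by
    intro x hx y hy
    refine hS.isPreconnected.induction₂ Q ?_ ?_ ?_ hx hy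
    · intro z _
      have : Metric.ball z 1 ∈ 𝓝[S] z := mem_nhdsWithin_of_mem_nhds (Metric.ball_mem_nhds z one_pos)
      filter_upwards [this] with t ht hz' ht'
      exact step z hz' (f t) (hf z t (by rw [dist_comm]; exact ht))
    · intro a b c _ hb _ hab hbc ha hc
      exact (hab ha hb).trans (hbc hb hc)
    · intro a b _ _ hab hb ha
      exact (hab ha hb).symm
  have : Nonempty ↥(fnbhd G f r S) := ⟨⟨f x₀, hmem x₀ hx₀⟩⟩
  refine Connected.mk ?_
  rintro ⟨v, x, hx, hv⟩ ⟨w, y, hy, hw⟩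
  exact (step x hx v hv).symm.trans ((key x hx y hy hx hy).trans (step y hy w hw))

/-- The initial segment of a walk before its first visit to `T`. -/
lemma exists_initial_segment {u v : V} (p : G.Walk u v) {T : Set V} (hu : u ∉ T) (hv : v ∈ T) :
    ∃ (Q : Set V), (G.induce Q).Connected ∧ u ∈ Q ∧ (∀ x ∈ Q, x ∈ p.support) ∧ Disjoint Q T ∧
      ∃ x ∈ Q, ∃ y ∈ T, G.Adj x y := by
  induction p with
  | nil => exact absurd hv hu
  | @cons u w v huw p ih =>
    have hsingle : (G.induce {u}).Connected := by
      have : Nonempty ↥({u} : Set V) := ⟨⟨u, rfl⟩⟩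
      refine Connected.mk ?_
      rintro ⟨x, rfl⟩ ⟨y, rfl⟩
      rfl
    by_cases hw : w ∈ T
    · exact ⟨{u}, hsingle, rfl, by simp, by simpa using hu, u, rfl, w, hw, huw⟩
    · obtain ⟨Q, hQ, hwQ, hsup, hdisj, x, hx, y, hy, hxy⟩ := ih hw hv
      refine ⟨{u} ∪ Q, induce_union_of_adj hsingle hQ rfl hwQ huw, Or.inl rfl, ?_, ?_,
        x, Or.inr hx, y, hy, hxy⟩
      · rintro z (rfl | hz)
        · simp
        · simp [hsup z hz]
      · rw [Set.disjoint_union_left]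
        exact ⟨by simpa using hu, hdisj⟩

/-- A sufficiently fat minor of a space quasi-isometric to a connected graph yields a minor of the
graph: thicken the images of the branch sets and of the branch paths, and attach to each branch set
an initial segment of every branch path leading to a later branch set. -/
theorem isGraphMinor_of_fat {W : Type*} [Countable W] {H : SimpleGraph W} (hG : G.Connected)
    {M A : ℝ} {f : X → V}
    (hf : IsQuasiIsometry (fun x y : X => dist x y) (graphDist G) M A f) :
    ∃ K : ℝ, 0 < K ∧ (HasMetricFatMinor H X K → IsGraphMinor H G) := by
  obtain ⟨hM, hA, hlow, hup, -⟩ := hf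
  simp only [graphDist] at hlow hup
  obtain ⟨r, hr⟩ := exists_nat_ge (M + A)
  obtain ⟨e, he⟩ := exists_injective_nat W
  -- sets whose images have intersecting `r`-neighbourhoods contain points at distance at most
  -- `M * (2 * r + A)`
  refine ⟨M * (2 * r + A) + 1, by positivity, ?_⟩
  rintro ⟨B, P, hB, -, hP, -, hBB, hPP, hPB⟩
  have hr1 : ∀ x y, dist x y < 1 → G.dist (f x) (f y) ≤ r := by
    intro x y hxy
    have h1 := hup x y
    have h2 : M * dist x y ≤ M * 1 := by gcongr
    have : (G.dist (f x) (f y) : ℝ) ≤ r := by linarith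
    exact_mod_cast this
  have hsep : ∀ S T : Set X, (∀ x ∈ S, ∀ y ∈ T, M * (2 * r + A) + 1 ≤ dist x y) →
      Disjoint (fnbhd G f r S) (fnbhd G f r T) := by
    intro S T hST
    rw [Set.disjoint_left]
    rintro v ⟨x, hx, hxv⟩ ⟨y, hy, hyv⟩
    have h1 := hST x hx y hy
    have h2 := hlow x y
    have h3 := hG.dist_triangle (u := f x) (v := v) (w := f y)
    rw [G.dist_comm (u := v)] at h3
    have h4 : (G.dist (f x) (f y) : ℝ) ≤ 2 * r := by
      have : G.dist (f x) (f y) ≤ 2 * r := by omega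
      exact_mod_cast this
    have h5 : M⁻¹ * dist x y ≤ 2 * r + A := by linarith
    have h6 : dist x y ≤ M * (2 * r + A) := by
      rwa [inv_mul_le_iff₀ (by linarith)] at h5
    linarith
  let N : Set X → Set V := fnbhd G f r
  have hNB : ∀ v, (G.induce (N (B v))).Connected := fun v => fnbhd_connected hG hr1 (hB v)
  have hQ : ∀ u w, ∃ Q : Set V, H.Adj u w → e u < e w → (G.induce Q).Connected ∧
      (N (B u) ∩ Q).Nonempty ∧ Q ⊆ N (P s(u, w)) ∧ Disjoint Q (N (B w)) ∧
      ∃ x ∈ Q, ∃ y ∈ N (B w), G.Adj x y := by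
    intro u w
    by_cases h : H.Adj u w ∧ e u < e w
    · obtain ⟨a, ha, b, hb, hab, hmeet⟩ := hP u w h.1
      have haP : a ∈ P s(u, w) := by
        have : a ∈ P s(u, w) ∩ ⋃ v, B v := by rw [hmeet]; simp
        exact this.1
      have hbP : b ∈ P s(u, w) := by
        have : b ∈ P s(u, w) ∩ ⋃ v, B v := by rw [hmeet]; simp
        exact this.1
      have hconn : IsConnected (P s(u, w)) := by
        obtain ⟨p, -, hp⟩ := hab
        rw [← hp]
        exact isConnected_range p.continuous
      have hc := fnbhd_connected hG hr1 hconn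
      have hfa : f a ∈ N (P s(u, w)) := ⟨a, haP, by simp⟩
      have hfb : f b ∈ N (P s(u, w)) := ⟨b, hbP, by simp⟩
      obtain ⟨p⟩ := hc.preconnected ⟨f a, hfa⟩ ⟨f b, hfb⟩
      have hd := hsep _ _ (hBB u w h.1.ne)
      obtain ⟨Q, hQ, haQ, hQp, hQT, hadj⟩ := exists_initial_segment
        (p.map (Embedding.induce (N (P s(u, w)))).toHom) (T := N (B w))
        (fun hh => Set.disjoint_left.1 hd ⟨a, ha, by simp⟩ hh) ⟨b, hb, by simp⟩
      refine ⟨Q, fun _ _ => ⟨hQ, ⟨f a, ⟨a, ha, by simp⟩, haQ⟩, ?_, hQT, hadj⟩⟩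
      intro z hz
      have := hQp z hz
      rw [Walk.support_map, List.mem_map] at this
      obtain ⟨z', -, rfl⟩ := this
      exact z'.2
    · exact ⟨∅, fun h1 h2 => absurd ⟨h1, h2⟩ h⟩
  choose Q hQ using hQ
  -- the numbering `e` of the vertices decides which end of an edge receives the branch path
  let B' : W → Set V := fun u => {v | v ∈ N (B u) ∨ ∃ w, H.Adj u w ∧ e u < e w ∧ v ∈ Q u w}
  have hsub : ∀ u, N (B u) ⊆ B' u := fun u v hv => Or.inl hv
  -- a thickened branch set avoids the attached segments belonging to other branch sets
  have hBQ : ∀ u v w, u ≠ v → H.Adj v w → e v < e w → Disjoint (N (B u)) (Q v w) := by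
    intro u v w huv hvw hlt
    obtain ⟨-, -, hs, hd, -⟩ := hQ v w hvw hlt
    by_cases huw : u = w
    · subst huw
      exact hd.symm
    · exact (Set.disjoint_of_subset_left hs (hsep _ _ (hPB v w hvw u huv huw))).symm
  refine ⟨B', ?_, ?_, ?_⟩
  · intro u
    obtain ⟨⟨v₀, hv₀⟩⟩ := (hNB u).nonempty
    refine G.induce_connected_of_patches v₀ (hsub u hv₀) ?_
    intro v hv
    rcases hv with hv | ⟨w, huw, hlt, hv⟩
    · exact ⟨N (B u), hsub u, hv₀, hv, (hNB u).preconnected _ _⟩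
    · obtain ⟨hc, hne, -⟩ := hQ u w huw hlt
      refine ⟨N (B u) ∪ Q u w, ?_, Or.inl hv₀, Or.inr hv,
        (induce_union_connected (hNB u).preconnected hc.preconnected hne) _ _⟩
      exact Set.union_subset (hsub u) fun z hz => Or.inr ⟨w, huw, hlt, hz⟩
  · intro u v huv
    rw [Set.disjoint_left]
    rintro x (hx | ⟨w, huw, hlt, hx⟩) (hx' | ⟨z, hvz, hlt', hx'⟩)
    · exact Set.disjoint_left.1 (hsep _ _ (hBB u v huv)) hx hx'
    · exact Set.disjoint_left.1 (hBQ u v z huv hvz hlt') hx hx'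
    · exact Set.disjoint_left.1 (hBQ v u w huv.symm huw hlt) hx' hx
    · have hne : s(u, w) ≠ s(v, z) := by
        intro h
        rcases Sym2.eq_iff.1 h with ⟨h1, -⟩ | ⟨h1, h2⟩
        · exact huv h1
        · subst h1 h2
          omega
      exact Set.disjoint_left.1 (hsep _ _ (hPP _ huw _ hvz hne))
        ((hQ u w huw hlt).2.2.1 hx) ((hQ v z hvz hlt').2.2.1 hx')
  · intro u w huw
    rcases lt_trichotomy (e u) (e w) with hlt | heq | hlt
    · obtain ⟨-, -, -, -, x, hx, y, hy, hxy⟩ := hQ u w huw hlt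
      exact ⟨x, Or.inr ⟨w, huw, hlt, hx⟩, y, Or.inl hy, hxy⟩
    · exact absurd (he heq) huw.ne
    · obtain ⟨-, -, -, -, x, hx, y, hy, hxy⟩ := hQ w u huw.symm hlt
      exact ⟨y, Or.inl hy, x, Or.inr ⟨u, huw.symm, hlt, hx⟩, hxy.symm⟩

end FatToMinor

/-! ### `K_{2,3}` is a subdivision of `Θ` -/

section Bipartite

open SimpleGraph

/-- The branch vertices of `Θ` in `K_{2,3}`. -/
def thetaVertex : Fin 4 → Fin 2 ⊕ Fin 3 := ![Sum.inr 0, Sum.inr 1, Sum.inl 0, Sum.inl 1]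

/-- The vertices of the path of `K_{2,3}` replacing the edge `uv` of `Θ`: only the edge between the
two vertices of degree three is subdivided. -/
def thetaSupport (u v : Fin 4) : List (Fin 2 ⊕ Fin 3) :=
  if u = 2 ∧ v = 3 then [Sum.inl 0, Sum.inr 2, Sum.inl 1]
  else if u = 3 ∧ v = 2 then [Sum.inl 1, Sum.inr 2, Sum.inl 0]
  else [thetaVertex u, thetaVertex v]

lemma thetaGraph_adj_iff (u v : Fin 4) :
    thetaGraph.Adj u v ↔ u ≠ v ∧ ¬ (u = 0 ∧ v = 1) ∧ ¬ (u = 1 ∧ v = 0) := by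
  simp only [thetaGraph, deleteEdges_adj, top_adj, Set.mem_singleton_iff, Sym2.eq_iff]
  tauto

/-- A membership test with an instance for which `decide` evaluates reliably. -/
instance decidableMemBipartite (w : Fin 2 ⊕ Fin 3) (l : List (Fin 2 ⊕ Fin 3)) :
    Decidable (w ∈ l) :=
  @List.instDecidableMemOfLawfulBEq _ instBEqOfDecidableEq inferInstance w l

set_option synthInstance.maxHeartbeats 400000 in
set_option synthInstance.maxSize 2000 in
/-- Subdividing once the edge of `Θ` between its two vertices of degree three yields `K_{2,3}`. -/
theorem isSubdivisionOf_bipartite :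
    IsSubdivisionOf (completeBipartiteGraph (Fin 2) (Fin 3)) thetaGraph := by
  have hex : ∀ u v, thetaGraph.Adj u v →
      ∃ p : (completeBipartiteGraph (Fin 2) (Fin 3)).Walk (thetaVertex u) (thetaVertex v),
        p.support = thetaSupport u v ∧
          p.edges = (thetaSupport u v).zipWith (fun a b => s(a, b)) (thetaSupport u v).tail := by
    intro u v h
    have hb : ∀ i j, (completeBipartiteGraph (Fin 2) (Fin 3)).Adj (Sum.inl i) (Sum.inr j) := by
      simp
    have hb' : ∀ i j, (completeBipartiteGraph (Fin 2) (Fin 3)).Adj (Sum.inr i) (Sum.inl j) := by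
      simp
    rw [thetaGraph_adj_iff] at h
    fin_cases u <;> fin_cases v <;> first
      | (exfalso; revert h; decide)
      | exact ⟨Walk.cons (hb _ _) Walk.nil, rfl, rfl⟩
      | exact ⟨Walk.cons (hb' _ _) Walk.nil, rfl, rfl⟩
      | exact ⟨Walk.cons (hb _ 2) (Walk.cons (hb' _ _) Walk.nil), rfl, rfl⟩
  choose P hP hE using hex
  refine ⟨thetaVertex, P, by decide, ?_, ?_, ?_, ?_, ?_, ?_⟩
  · intro u v h
    rw [Walk.isPath_def, hP]
    rw [thetaGraph_adj_iff] at h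
    revert u v
    decide
  · intro u v h
    rw [hP, hP]
    rw [thetaGraph_adj_iff] at h
    revert u v
    decide
  · intro u v h
    simp only [hP]
    rw [thetaGraph_adj_iff] at h
    revert u v
    simp only [Set.mem_range]
    decide
  · intro u v u' v' h h'
    simp only [hP, ne_eq, Sym2.eq_iff]
    rw [thetaGraph_adj_iff] at h h'
    intro hne w hw hw'
    have key : ∀ w : Fin 2 ⊕ Fin 3, ∀ u v : Fin 4,
        (u ≠ v ∧ ¬(u = 0 ∧ v = 1) ∧ ¬(u = 1 ∧ v = 0)) ∧ w ∈ thetaSupport u v →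
        ∀ u' v' : Fin 4, ((u' ≠ v' ∧ ¬(u' = 0 ∧ v' = 1) ∧ ¬(u' = 1 ∧ v' = 0)) ∧
          w ∈ thetaSupport u' v') ∧ ¬(u = u' ∧ v = v' ∨ u = v' ∧ v = u') →
        (w = thetaVertex u ∨ w = thetaVertex v) ∧ (w = thetaVertex u' ∨ w = thetaVertex v') := by
      decide +kernel
    exact key w u v ⟨h, hw⟩ u' v' ⟨⟨h', hw'⟩, hne⟩
  · intro w
    simp only [hP, thetaGraph_adj_iff, Set.mem_range, exists_prop]
    revert w
    decide
  · intro e he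
    simp only [hE, thetaGraph_adj_iff]
    have key : ∀ i j, ∃ u v, ∃ (_ : u ≠ v ∧ ¬ (u = 0 ∧ v = 1) ∧ ¬ (u = 1 ∧ v = 0)),
        s((Sum.inl i : Fin 2 ⊕ Fin 3), Sum.inr j) ∈
          (thetaSupport u v).zipWith (fun a b => s(a, b)) (thetaSupport u v).tail := by
      decide
    revert he
    induction e with | _ a b => ?_
    intro he
    rcases a with a | a <;> rcases b with b | b
    · simp at he
    · exact key a b
    · rw [Sym2.eq_swap]
      exact key b a
    · simp at he

end Bipartite

/-! ### Subdivisions of `Θ` as systems of three threads -/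

section Threads

open SimpleGraph hiding dist dist_comm

/-- The graph `Θ'` consists of three paths (threads) from `a` to `b`: the `i`-th one has `m i` edges
and its vertices are `g i 0, …, g i (m i)`. The inner vertices are pairwise distinct and different
from `a` and `b`, and every vertex and every edge lies on a thread. -/
structure ThetaThreads {W : Type*} (Θ' : SimpleGraph W) (a b : W) (m : Fin 3 → ℕ)
    (g : Fin 3 → ℕ → W) : Prop where
  ne : a ≠ b
  pos : ∀ i, 1 ≤ m i
  first : ∀ i, g i 0 = a
  last : ∀ i, g i (m i) = b
  cover : ∀ w, w = a ∨ w = b ∨ ∃ i j, 0 < j ∧ j < m i ∧ g i j = w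
  inj : ∀ i j i' j', 0 < j → j < m i → j' ≤ m i' → g i j = g i' j' → i = i' ∧ j = j'
  edges : ∀ e ∈ Θ'.edgeSet, ∃ i j, j < m i ∧ e = s(g i j, g i (j + 1))

lemma exists_getVert_of_mem_edges {W : Type*} {G : SimpleGraph W} {u v : W} (p : G.Walk u v)
    {e : Sym2 W} (he : e ∈ p.edges) :
    ∃ j < p.length, e = s(p.getVert j, p.getVert (j + 1)) := by
  induction p with
  | nil => simp at he
  | cons h p ih =>
    rw [Walk.edges_cons, List.mem_cons] at he
    rcases he with rfl | he
    · exact ⟨0, by simp, by simp⟩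
    · obtain ⟨j, hj, rfl⟩ := ih he
      exact ⟨j + 1, by simpa using hj, by simp⟩

lemma isPath_append {W : Type*} {G : SimpleGraph W} {u v w : W} {p : G.Walk u v} {q : G.Walk v w}
    (hp : p.IsPath) (hq : q.IsPath) (h : ∀ x ∈ p.support, x ∈ q.support → x = v) :
    (p.append q).IsPath := by
  rw [Walk.isPath_def] at *
  rw [Walk.support_append]
  refine List.Nodup.append hp (hq.sublist (List.tail_sublist _)) ?_
  intro x hx hx'
  have := h x hx (List.mem_of_mem_tail hx')
  subst this
  rw [← Walk.cons_tail_support] at hq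
  exact (List.nodup_cons.1 hq).1 hx'

/-- The branch vertices `2` and `3` of degree three are joined by the subdivided edge `23` and by the
two concatenated paths running through the branch vertices `0` and `1` of degree two. -/
theorem exists_thetaThreads {W : Type*} {Θ' : SimpleGraph W}
    (h : IsSubdivisionOf Θ' thetaGraph) : ∃ a b m g, ThetaThreads Θ' a b m g := by
  obtain ⟨φ, P, hφ, hP, hrev, hbr, hmeet, hcov, hedge⟩ := h
  have a20 : thetaGraph.Adj 2 0 := by rw [thetaGraph_adj_iff]; decide
  have a21 : thetaGraph.Adj 2 1 := by rw [thetaGraph_adj_iff]; decide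
  have a03 : thetaGraph.Adj 0 3 := by rw [thetaGraph_adj_iff]; decide
  have a13 : thetaGraph.Adj 1 3 := by rw [thetaGraph_adj_iff]; decide
  have a23 : thetaGraph.Adj 2 3 := by rw [thetaGraph_adj_iff]; decide
  have hrev' : ∀ u v (h : thetaGraph.Adj u v), P v u h.symm = (P u v h).reverse := by
    intro u v h
    apply Walk.ext_support
    rw [hrev, Walk.support_reverse]
  -- a statement about the paths `P u v` that is invariant under reversal can be checked on five edges
  have hfive : ∀ p : (u v : Fin 4) → thetaGraph.Adj u v → Prop,
      (∀ u v h, p u v h → p v u h.symm) → p 2 0 a20 → p 2 1 a21 → p 0 3 a03 → p 1 3 a13 →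
      p 2 3 a23 → ∀ u v h, p u v h := by
    intro p hs h1 h2 h3 h4 h5 u v h
    have h' := h
    rw [thetaGraph_adj_iff] at h'
    fin_cases u <;> fin_cases v <;> first
      | (exfalso; revert h'; decide)
      | exact h1
      | exact h2
      | exact h3
      | exact h4
      | exact h5
      | exact hs _ _ _ h1
      | exact hs _ _ _ h2
      | exact hs _ _ _ h3
      | exact hs _ _ _ h4
      | exact hs _ _ _ h5
  have hne : ∀ i j : Fin 4, i ≠ j → φ i ≠ φ j := fun i j hij h => hij (hφ h)
  let q : Fin 3 → Θ'.Walk (φ 2) (φ 3) :=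
    ![(P 2 0 a20).append (P 0 3 a03), (P 2 1 a21).append (P 1 3 a13), P 2 3 a23]
  have hq : ∀ i, (q i).IsPath := by
    intro i
    fin_cases i
    · refine isPath_append (hP _ _ _) (hP _ _ _) fun x hx hx' => ?_
      have := hmeet 2 0 0 3 a20 a03 (by decide) x hx hx'
      rcases this with ⟨rfl | h1, h2⟩
      · rcases h2 with h2 | h2 <;> exact absurd (hφ h2) (by decide)
      · exact h1
    · refine isPath_append (hP _ _ _) (hP _ _ _) fun x hx hx' => ?_
      have := hmeet 2 1 1 3 a21 a13 (by decide) x hx hx'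
      rcases this with ⟨rfl | h1, h2⟩
      · rcases h2 with h2 | h2 <;> exact absurd (hφ h2) (by decide)
      · exact h1
    · exact hP _ _ _
  have hmem0 : ∀ x, x ∈ (q 0).support ↔ x ∈ (P 2 0 a20).support ∨ x ∈ (P 0 3 a03).support :=
    fun x => Walk.mem_support_append_iff _ _
  have hmem1 : ∀ x, x ∈ (q 1).support ↔ x ∈ (P 2 1 a21).support ∨ x ∈ (P 1 3 a13).support :=
    fun x => Walk.mem_support_append_iff _ _
  have hmem2 : ∀ x, x ∈ (q 2).support ↔ x ∈ (P 2 3 a23).support := fun x => Iff.rfl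
  have h01 : ∀ x, x ∈ (q 0).support → x ∈ (q 1).support → x = φ 2 ∨ x = φ 3 := by
    intro x hx hx'
    rw [hmem0] at hx
    rw [hmem1] at hx'
    have n1 := hne 0 1 (by decide)
    have n2 := hne 0 2 (by decide)
    have n3 := hne 0 3 (by decide)
    rcases hx with hx | hx <;> rcases hx' with hx' | hx'
    · have := hmeet _ _ _ _ a20 a21 (by decide) x hx hx'
      grind
    · have := hmeet _ _ _ _ a20 a13 (by decide) x hx hx'
      grind
    · have := hmeet _ _ _ _ a03 a21 (by decide) x hx hx'
      grind
    · have := hmeet _ _ _ _ a03 a13 (by decide) x hx hx'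
      grind
  have h02 : ∀ x, x ∈ (q 0).support → x ∈ (q 2).support → x = φ 2 ∨ x = φ 3 := by
    intro x hx hx'
    rw [hmem0] at hx
    rw [hmem2] at hx'
    rcases hx with hx | hx
    · exact (hmeet _ _ _ _ a20 a23 (by decide) x hx hx').2
    · exact (hmeet _ _ _ _ a03 a23 (by decide) x hx hx').2
  have h12 : ∀ x, x ∈ (q 1).support → x ∈ (q 2).support → x = φ 2 ∨ x = φ 3 := by
    intro x hx hx'
    rw [hmem1] at hx
    rw [hmem2] at hx'
    rcases hx with hx | hx
    · exact (hmeet _ _ _ _ a21 a23 (by decide) x hx hx').2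
    · exact (hmeet _ _ _ _ a13 a23 (by decide) x hx hx').2
  have hcross : ∀ i i' x, i ≠ i' → x ∈ (q i).support → x ∈ (q i').support →
      x = φ 2 ∨ x = φ 3 := by
    intro i i' x hii hx hx'
    fin_cases i <;> fin_cases i' <;> first
      | exact absurd rfl hii
      | exact h01 x hx hx'
      | exact h01 x hx' hx
      | exact h02 x hx hx'
      | exact h02 x hx' hx
      | exact h12 x hx hx'
      | exact h12 x hx' hx
  have hsup : ∀ x, ∃ i, x ∈ (q i).support := by
    have key : ∀ u v h, ∀ x ∈ (P u v h).support, ∃ i, x ∈ (q i).support := by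
      apply hfive
      · intro u v h hx x hx'
        rw [hrev u v h, List.mem_reverse] at hx'
        exact hx x hx'
      · exact fun x hx => ⟨0, (hmem0 x).2 (Or.inl hx)⟩
      · exact fun x hx => ⟨1, (hmem1 x).2 (Or.inl hx)⟩
      · exact fun x hx => ⟨0, (hmem0 x).2 (Or.inr hx)⟩
      · exact fun x hx => ⟨1, (hmem1 x).2 (Or.inr hx)⟩
      · exact fun x hx => ⟨2, hx⟩
    intro x
    rcases hcov x with ⟨k, rfl⟩ | ⟨u, v, h, hx⟩
    · fin_cases k
      · exact key 2 0 a20 _ (Walk.end_mem_support _)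
      · exact key 2 1 a21 _ (Walk.end_mem_support _)
      · exact key 2 3 a23 _ (Walk.start_mem_support _)
      · exact key 2 3 a23 _ (Walk.end_mem_support _)
    · exact key u v h x hx
  have hinj : ∀ i j j', j ≤ (q i).length → j' ≤ (q i).length →
      (q i).getVert j = (q i).getVert j' → j = j' :=
    fun i j j' hj hj' h => (hq i).getVert_injOn hj hj' h
  refine ⟨φ 2, φ 3, fun i => (q i).length, fun i => (q i).getVert, hne _ _ (by decide), ?_, ?_, ?_,
    ?_, ?_, ?_⟩
  · intro i
    by_contra hlt
    have : (q i).length = 0 := by omega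
    exact hne 2 3 (by decide) (Walk.eq_of_length_eq_zero this)
  · intro i
    simp
  · intro i
    simp
  · intro w
    obtain ⟨i, hi⟩ := hsup w
    obtain ⟨j, hj, hjl⟩ := Walk.mem_support_iff_exists_getVert.1 hi
    rcases Nat.eq_zero_or_pos j with rfl | hpos
    · left
      rw [← hj]
      simp
    · rcases hjl.lt_or_eq with hlt | rfl
      · exact Or.inr (Or.inr ⟨i, j, hpos, hlt, hj⟩)
      · right; left
        rw [← hj]
        simp
  · intro i j i' j' hj hji hj' heq
    have hii : i = i' := by
      by_contra hii
      rcases hcross i i' _ hii (Walk.getVert_mem_support _ j)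
        (heq ▸ Walk.getVert_mem_support _ j') with h | h
      · have := hinj i j 0 hji.le (Nat.zero_le _) (by rw [h]; simp)
        omega
      · have := hinj i j (q i).length hji.le le_rfl (by rw [h]; simp)
        omega
    subst hii
    exact ⟨rfl, hinj i j j' hji.le hj' heq⟩
  · have key : ∀ u v h, ∀ e ∈ (P u v h).edges, ∃ i, e ∈ (q i).edges := by
      apply hfive
      · intro u v h hx e he
        rw [hrev' u v h, Walk.edges_reverse, List.mem_reverse] at he
        exact hx e he
      · exact fun x hx => ⟨0, by
          change x ∈ (Walk.append _ _).edges
          rw [Walk.edges_append]; exact List.mem_append_left _ hx⟩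
      · exact fun x hx => ⟨1, by
          change x ∈ (Walk.append _ _).edges
          rw [Walk.edges_append]; exact List.mem_append_left _ hx⟩
      · exact fun x hx => ⟨0, by
          change x ∈ (Walk.append _ _).edges
          rw [Walk.edges_append]; exact List.mem_append_right _ hx⟩
      · exact fun x hx => ⟨1, by
          change x ∈ (Walk.append _ _).edges
          rw [Walk.edges_append]; exact List.mem_append_right _ hx⟩
      · exact fun x hx => ⟨2, hx⟩
    intro e he
    obtain ⟨u, v, h, hx⟩ := hedge e he
    obtain ⟨i, hi⟩ := key u v h e hx
    obtain ⟨j, hj, hje⟩ := exists_getVert_of_mem_edges _ hi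
    exact ⟨i, j, hj, hje⟩

end Threads

/-! ### Lipschitz curves and arcs in length spaces -/

section Curves

open Set Topology

variable {X : Type*} [MetricSpace X]

/-- `γ` is an `ℓ`-Lipschitz curve; it is regarded as a curve from `γ 0` to `γ 1`. -/
def LipCurve (γ : ℝ → X) (ℓ : ℝ) : Prop := ∀ s t, dist (γ s) (γ t) ≤ ℓ * |s - t|

lemma LipCurve.nonneg {γ : ℝ → X} {ℓ : ℝ} (h : LipCurve γ ℓ) : 0 ≤ ℓ := by
  have := (dist_nonneg).trans (h 0 1)
  simpa using this

lemma LipCurve.continuous {γ : ℝ → X} {ℓ : ℝ} (h : LipCurve γ ℓ) : Continuous γ := by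
  refine (LipschitzWith.of_dist_le_mul (K := ⟨ℓ, h.nonneg⟩) fun s t => ?_).continuous
  rw [Real.dist_eq]
  exact h s t

/-- Reparametrization by arc length: a curve whose length is controlled by a monotone function `V`
becomes Lipschitz. The new curve takes at time `s` the value of the old one at the last moment at
which `V` does not exceed the fraction `s` of its total increase. -/
lemma exists_lipCurve_of_monotone {f : ℝ → X} (hf : Continuous f) {V : ℝ → ℝ}
    (hV : ∀ s t, s ≤ t → dist (f s) (f t) ≤ V t - V s) :
    ∃ g : ℝ → X, LipCurve g (V 1 - V 0) ∧ g 0 = f 0 ∧ g 1 = f 1 := by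
  have hmono : Monotone V := fun s t hst => by linarith [dist_nonneg.trans (hV s t hst)]
  set ℓ := V 1 - V 0 with hℓ
  have hℓ0 : 0 ≤ ℓ := sub_nonneg.2 (hmono zero_le_one)
  let S : ℝ → Set ℝ := fun s => {t | t ∈ Icc (0 : ℝ) 1 ∧ (t = 0 ∨ V t ≤ V 0 + ℓ * s)}
  have h0 : ∀ s, (0 : ℝ) ∈ S s := fun s => ⟨⟨le_rfl, zero_le_one⟩, Or.inl rfl⟩
  have hbdd : ∀ s, BddAbove (S s) := fun s => ⟨1, fun t ht => ht.1.2⟩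
  have hne : ∀ s, (S s).Nonempty := fun s => ⟨0, h0 s⟩
  let τ : ℝ → ℝ := fun s => sSup (S s)
  have hτ0 : ∀ s, 0 ≤ τ s := fun s => le_csSup (hbdd s) (h0 s)
  have hτ1 : ∀ s, τ s ≤ 1 := fun s => csSup_le (hne s) fun t ht => ht.1.2
  have hτm : Monotone τ := by
    intro s s' hss
    refine csSup_le_csSup (hbdd s') (hne s) ?_
    rintro t ⟨ht, ht'⟩
    refine ⟨ht, ht'.imp_right fun h => h.trans ?_⟩
    gcongr
  have hlip : ∀ s s', s ≤ s' → dist (f (τ s)) (f (τ s')) ≤ ℓ * (s' - s) := by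
    intro s s' hss
    rcases (hτm hss).eq_or_lt with heq | hlt
    · rw [heq, dist_self]
      exact mul_nonneg hℓ0 (sub_nonneg.2 hss)
    refine le_of_forall_pos_le_add fun ε hε => ?_
    obtain ⟨δ, hδ, hδ'⟩ := Metric.continuous_iff.1 hf (τ s) (ε / 2) (half_pos hε)
    obtain ⟨η, hη, hη'⟩ := Metric.continuous_iff.1 hf (τ s') (ε / 2) (half_pos hε)
    obtain ⟨t₂, ht₂, hlt₂⟩ := exists_lt_of_lt_csSup (hne s')
      (show max (τ s) (τ s' - η) < sSup (S s') from max_lt hlt (sub_lt_self _ hη))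
    have hle₂ : t₂ ≤ τ s' := le_csSup (hbdd s') ht₂
    rw [max_lt_iff] at hlt₂
    obtain ⟨t₁, h1, h2⟩ := exists_between
      (show τ s < min t₂ (τ s + δ) from lt_min hlt₂.1 (lt_add_of_pos_right _ hδ))
    rw [lt_min_iff] at h2
    have hV1 : V 0 + ℓ * s < V t₁ := by
      by_contra hle
      exact absurd (le_csSup (hbdd s)
        (⟨⟨(hτ0 s).trans h1.le, by linarith [hτ1 s']⟩, Or.inr (not_lt.1 hle)⟩ : t₁ ∈ S s)) (not_le.2 h1)
    have hV2 : V t₂ ≤ V 0 + ℓ * s' := by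
      rcases ht₂.2 with h | h
      · linarith [hτ0 s]
      · exact h
    have d1 := hδ' t₁ (by rw [Real.dist_eq, abs_of_pos (by linarith)]; linarith)
    have d2 := hη' t₂ (by rw [Real.dist_eq, abs_of_nonpos (by linarith)]; linarith)
    have d3 := hV t₁ t₂ h2.1.le
    have d4 := dist_triangle4 (f (τ s)) (f t₁) (f t₂) (f (τ s'))
    rw [dist_comm (f (τ s)) (f t₁)] at d4
    nlinarith
  refine ⟨fun s => f (τ s), ?_, ?_, ?_⟩
  · intro s t
    rcases le_total s t with h | h
    · rw [abs_sub_comm, abs_of_nonneg (sub_nonneg.2 h)]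
      exact hlip s t h
    · rw [abs_of_nonneg (sub_nonneg.2 h), dist_comm]
      exact hlip t s h
  · have hsub : S 0 ⊆ {t | f t = f 0} := by
      rintro t ⟨ht, rfl | ht'⟩
      · rfl
      · have := hV 0 t ht.1
        have : dist (f 0) (f t) ≤ 0 := by linarith
        exact (dist_le_zero.1 this).symm
    have hcl : IsClosed {t | f t = f 0} := isClosed_eq hf continuous_const
    exact hcl.closure_subset_iff.2 hsub (csSup_mem_closure (hne 0) (hbdd 0))
  · have : τ 1 = 1 :=
      le_antisymm (hτ1 1) (le_csSup (hbdd 1) ⟨⟨zero_le_one, le_rfl⟩, Or.inr (by linarith)⟩)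
    simp only [this]

/-- In a length space any two points are joined by Lipschitz curves of Lipschitz constant arbitrarily
close to their distance. -/
theorem IsLengthSpace.exists_lipCurve (hX : IsLengthSpace X) (x y : X) {ε : ℝ} (hε : 0 < ε) :
    ∃ (γ : ℝ → X) (ℓ : ℝ), LipCurve γ ℓ ∧ ℓ ≤ dist x y + ε ∧ γ 0 = x ∧ γ 1 = y := by
  obtain ⟨p, hp⟩ := hX x y ε hε
  let E : unitInterval → ENNReal := fun t => eVariationOn (fun t => p t) (univ ∩ Icc 0 t)
  have hEtop : ∀ t, E t ≠ ⊤ := fun t =>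
    (((eVariationOn.mono _ inter_subset_left).trans hp).trans_lt ENNReal.ofReal_lt_top).ne
  have hE : ∀ s t : unitInterval, s ≤ t → dist (p s) (p t) ≤ (E t).toReal - (E s).toReal := by
    intro s t hst
    have h1 := eVariationOn.Icc_add_Icc (fun t => p t) (s := univ) (unitInterval.nonneg' (t := s))
      hst (mem_univ _)
    have h2 := eVariationOn.edist_le (fun t => p t) (s := univ ∩ Icc s t) (x := s) (y := t)
      ⟨mem_univ _, le_rfl, hst⟩ ⟨mem_univ _, hst, le_rfl⟩
    have h3 : E s + edist (p s) (p t) ≤ E t := by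
      calc E s + edist (p s) (p t) ≤ _ := add_le_add le_rfl h2
        _ = E t := h1
    have h4 := ENNReal.toReal_mono (hEtop t) h3
    rw [ENNReal.toReal_add (hEtop s) (edist_ne_top _ _), ← dist_edist] at h4
    linarith
  obtain ⟨g, hg, hg0, hg1⟩ := exists_lipCurve_of_monotone
    (f := fun t => p (projIcc 0 1 zero_le_one t)) (V := fun t => (E (projIcc 0 1 zero_le_one t)).toReal)
    (p.continuous.comp continuous_projIcc) fun s t hst => hE _ _ (monotone_projIcc _ hst)
  refine ⟨g, _, hg, ?_, ?_, ?_⟩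
  · have h1 : (E (projIcc 0 1 zero_le_one 1)).toReal ≤ dist x y + ε := by
      refine ENNReal.toReal_le_of_le_ofReal (by positivity) ?_
      exact (eVariationOn.mono _ inter_subset_left).trans hp
    have h2 : 0 ≤ (E (projIcc 0 1 zero_le_one 0)).toReal := ENNReal.toReal_nonneg
    linarith
  · rw [hg0]
    simp
  · rw [hg1]
    simp

/-- Cutting out the segment of a Lipschitz curve between two times `s` and `t` with the same value and
reparametrizing multiplies the Lipschitz constant by the remaining fraction `1 - (t - s)` of time. -/
lemma LipCurve.cut {γ : ℝ → X} {ℓ : ℝ} (h : LipCurve γ ℓ) {s t : ℝ} (hs : 0 ≤ s)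
    (ht : t ≤ 1) (heq : γ s = γ t) :
    ∃ γ' : ℝ → X, LipCurve γ' (ℓ * (1 - (t - s))) ∧ γ' 0 = γ 0 ∧ γ' 1 = γ 1 ∧
      range γ' ⊆ range γ := by
  set c := 1 - (t - s) with hc
  have hc0 : 0 ≤ c := by linarith
  have hℓ := h.nonneg
  refine ⟨fun u => if c * u ≤ s then γ (c * u) else γ (c * u + (t - s)), ?_, ?_, ?_, ?_⟩
  · have key : ∀ u v, u ≤ v → dist (if c * u ≤ s then γ (c * u) else γ (c * u + (t - s)))
        (if c * v ≤ s then γ (c * v) else γ (c * v + (t - s))) ≤ ℓ * c * (v - u) := by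
      intro u v huv
      have hcuv : c * u ≤ c * v := by gcongr
      split_ifs with h1 h2 h2
      · have := h (c * u) (c * v)
        rw [abs_of_nonpos (by linarith)] at this
        linarith
      · have d1 := h (c * u) s
        have d2 := h t (c * v + (t - s))
        have d3 := dist_triangle (γ (c * u)) (γ s) (γ (c * v + (t - s)))
        rw [abs_of_nonpos (by linarith)] at d1 d2
        rw [← heq] at d2
        linarith
      · exact absurd (hcuv.trans h2) h1
      · have := h (c * u + (t - s)) (c * v + (t - s))
        rw [abs_of_nonpos (by linarith)] at this
        linarith
    intro u v
    rcases le_total u v with huv | huv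
    · rw [abs_sub_comm, abs_of_nonneg (sub_nonneg.2 huv)]
      exact key u v huv
    · rw [abs_of_nonneg (sub_nonneg.2 huv), dist_comm]
      exact key v u huv
  · simp [hs]
  · simp only [mul_one]
    split_ifs with h1
    · have h2 : t = 1 := by linarith
      have h3 : c = s := by linarith
      rw [h3, heq, h2]
    · congr 1
      linarith
  · rintro _ ⟨u, rfl⟩
    dsimp only
    split_ifs
    · exact mem_range_self _
    · exact mem_range_self _

/-- A compact set containing a Lipschitz curve from `x` to `y ≠ x` contains an injective one: minimize
the Lipschitz constant. -/
theorem exists_injOn_lipCurve {Z : Set X} (hZ : IsCompact Z) {γ : ℝ → X} {ℓ : ℝ}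
    (hγ : LipCurve γ ℓ) (hγZ : range γ ⊆ Z) (hne : γ 0 ≠ γ 1) :
    ∃ (γ' : ℝ → X) (ℓ' : ℝ), LipCurve γ' ℓ' ∧ range γ' ⊆ Z ∧ γ' 0 = γ 0 ∧ γ' 1 = γ 1 ∧
      InjOn γ' (Icc 0 1) := by
  let C : Set (ℝ × (ℝ → X)) := {q | LipCurve q.2 q.1 ∧ q.2 0 = γ 0 ∧ q.2 1 = γ 1}
  have hev : ∀ s : ℝ, Continuous fun q : ℝ × (ℝ → X) => q.2 s :=
    fun s => (continuous_apply s).comp continuous_snd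
  have hC : IsClosed C := by
    have hCeq : C = (⋂ s : ℝ, ⋂ t : ℝ, {q | dist (q.2 s) (q.2 t) ≤ q.1 * |s - t|}) ∩
        ({q | q.2 0 = γ 0} ∩ {q | q.2 1 = γ 1}) := by
      ext q
      simp [C, LipCurve]
    rw [hCeq]
    refine IsClosed.inter ?_ (IsClosed.inter ?_ ?_)
    · exact isClosed_iInter fun s => isClosed_iInter fun t =>
        isClosed_le ((hev s).dist (hev t)) (continuous_fst.mul continuous_const)
    · exact isClosed_eq (hev 0) continuous_const
    · exact isClosed_eq (hev 1) continuous_const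
  have hcomp : IsCompact ((Icc 0 ℓ ×ˢ Set.pi univ fun _ : ℝ => Z) ∩ C) :=
    (isCompact_Icc.prod (isCompact_univ_pi fun _ => hZ)).inter_right hC
  obtain ⟨⟨ℓ', γ'⟩, ⟨⟨hℓ', hZ'⟩, hlip, h0, h1⟩, hmin⟩ := hcomp.exists_isMinOn
    ⟨(ℓ, γ), ⟨⟨hγ.nonneg, le_rfl⟩, fun s _ => hγZ (mem_range_self s)⟩, hγ, rfl, rfl⟩
    continuous_fst.continuousOn
  dsimp only at hlip h0 h1 hℓ' hZ'
  have hrange : range γ' ⊆ Z := by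
    rintro _ ⟨s, rfl⟩
    exact hZ' s (mem_univ s)
  refine ⟨γ', ℓ', hlip, hrange, h0, h1, ?_⟩
  have hpos : 0 < ℓ' := by
    refine lt_of_le_of_ne hℓ'.1 fun h => hne ?_
    have := hlip 0 1
    rw [← h, zero_mul, h0, h1] at this
    exact dist_le_zero.1 this
  have key : ∀ s t, s ∈ Icc (0 : ℝ) 1 → t ∈ Icc (0 : ℝ) 1 → s < t → γ' s ≠ γ' t := by
    intro s t hs ht hst heq
    obtain ⟨γ'', hlip', h0', h1', hr⟩ := hlip.cut hs.1 ht.2 heq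
    have hlt : ℓ' * (1 - (t - s)) < ℓ' := by nlinarith
    have hmem : (ℓ' * (1 - (t - s)), γ'') ∈ (Icc 0 ℓ ×ˢ Set.pi univ fun _ : ℝ => Z) ∩ C :=
      ⟨⟨⟨hlip'.nonneg, hlt.le.trans hℓ'.2⟩, fun s _ => hrange (hr (mem_range_self s))⟩, hlip',
        h0'.trans h0, h1'.trans h1⟩
    exact absurd (hmin hmem) (not_le.2 hlt)
  intro s hs t ht heq
  rcases lt_trichotomy s t with h | h | h
  · exact absurd heq (key s t hs ht h)
  · exact h
  · exact absurd heq.symm (key t s ht hs h)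

lemma isArcIn_image {γ : ℝ → X} (hγ : Continuous γ) (hinj : InjOn γ (Icc 0 1)) {u v : ℝ}
    (hu : 0 ≤ u) (huv : u < v) (hv : v ≤ 1) : IsArcIn (γ '' Icc u v) (γ u) (γ v) := by
  refine ⟨⟨⟨fun w : unitInterval => γ (u + (v - u) * w), by fun_prop⟩, by simp, by simp⟩, ?_, ?_⟩
  · intro w w' h
    have hmem : ∀ w : unitInterval, u + (v - u) * w ∈ Icc (0 : ℝ) 1 := by
      intro w
      have h1 := w.2.1
      have h2 := w.2.2
      constructor <;> nlinarith
    have := hinj (hmem w) (hmem w') h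
    have hvu : v - u ≠ 0 := by linarith
    exact Subtype.ext (mul_left_cancel₀ hvu (add_left_cancel this))
  · ext z
    constructor
    · rintro ⟨w, rfl⟩
      have h1 := w.2.1
      have h2 := w.2.2
      exact ⟨u + (v - u) * w, ⟨by nlinarith, by nlinarith⟩, rfl⟩
    · rintro ⟨s, ⟨hs, hs'⟩, rfl⟩
      have hvu : 0 < v - u := by linarith
      refine ⟨⟨(s - u) / (v - u), div_nonneg (by linarith) hvu.le, by
        rw [div_le_one hvu]; linarith⟩, ?_⟩
      change γ (u + (v - u) * ((s - u) / (v - u))) = γ s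
      congr 1
      field_simp
      ring

/-- A Lipschitz curve leading from a closed set `S` to a disjoint closed set `T` contains an arc
meeting each of these two sets exactly in one of its end points. -/
theorem exists_arc_between {γ : ℝ → X} {ℓ : ℝ} (hγ : LipCurve γ ℓ) {s t : ℝ} (hst : s ≤ t)
    {S T : Set X} (hS : IsClosed S) (hT : IsClosed T) (hd : Disjoint S T) (hs : γ s ∈ S)
    (ht : γ t ∈ T) :
    ∃ a ∈ S, ∃ b ∈ T, ∃ A, IsArcIn A a b ∧ A ⊆ γ '' Icc s t ∧ A ∩ S = {a} ∧ A ∩ T = {b} := by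
  have hℓ := hγ.nonneg
  -- rescale the piece between `s` and `t` to the unit interval
  let γ₁ : ℝ → X := fun w => γ (projIcc s t hst (s + (t - s) * w))
  have hγ₁ : LipCurve γ₁ (ℓ * (t - s)) := by
    intro a b
    refine (hγ _ _).trans ?_
    rw [mul_assoc]
    refine mul_le_mul_of_nonneg_left ?_ hℓ
    have := (LipschitzWith.projIcc hst).dist_le_mul (s + (t - s) * a) (s + (t - s) * b)
    rw [Subtype.dist_eq, Real.dist_eq, Real.dist_eq] at this
    refine this.trans (le_of_eq ?_)
    rw [show s + (t - s) * a - (s + (t - s) * b) = (t - s) * (a - b) by ring, abs_mul,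
      abs_of_nonneg (sub_nonneg.2 hst)]
    simp
  have h0 : γ₁ 0 = γ s := by simp [γ₁]
  have h1 : γ₁ 1 = γ t := by simp [γ₁]
  have hr : range γ₁ ⊆ γ '' Icc s t := by
    rintro _ ⟨w, rfl⟩
    exact ⟨_, (projIcc s t hst (s + (t - s) * w)).2, rfl⟩
  rw [disjoint_left] at hd
  obtain ⟨δ, ℓ', hδ, hδr, hδ0, hδ1, hinj⟩ := exists_injOn_lipCurve
    (isCompact_Icc.image hγ.continuous) hγ₁ hr
    (by rw [h0, h1]; exact fun h => hd hs (h ▸ ht))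
  rw [h0] at hδ0
  rw [h1] at hδ1
  -- the last visit to `S`
  have hcS : IsCompact (Icc (0 : ℝ) 1 ∩ δ ⁻¹' S) :=
    isCompact_Icc.inter_right (hS.preimage hδ.continuous)
  obtain ⟨u, ⟨hu, huS⟩, humax⟩ := hcS.exists_isGreatest
    ⟨0, ⟨le_rfl, zero_le_one⟩, by rw [mem_preimage, hδ0]; exact hs⟩
  -- the first visit to `T` after it
  have hcT : IsCompact (Icc u 1 ∩ δ ⁻¹' T) :=
    isCompact_Icc.inter_right (hT.preimage hδ.continuous)
  obtain ⟨v, ⟨hv, hvT⟩, hvmin⟩ := hcT.exists_isLeast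
    ⟨1, ⟨hu.2, le_rfl⟩, by rw [mem_preimage, hδ1]; exact ht⟩
  have huv : u < v := lt_of_le_of_ne hv.1 fun h => hd huS (h ▸ hvT)
  refine ⟨δ u, huS, δ v, hvT, δ '' Icc u v, isArcIn_image hδ.continuous hinj hu.1 huv hv.2, ?_, ?_,
    ?_⟩
  · rintro _ ⟨w, -, rfl⟩
    exact hδr (mem_range_self w)
  · ext z
    constructor
    · rintro ⟨⟨w, hw, rfl⟩, hz⟩
      have : w ≤ u := humax ⟨⟨hu.1.trans hw.1, hw.2.trans hv.2⟩, hz⟩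
      rw [le_antisymm this hw.1]
      rfl
    · rintro rfl
      exact ⟨⟨u, ⟨le_rfl, huv.le⟩, rfl⟩, huS⟩
  · ext z
    constructor
    · rintro ⟨⟨w, hw, rfl⟩, hz⟩
      have : v ≤ w := hvmin ⟨⟨hw.1, hw.2.trans hv.2⟩, hz⟩
      rw [le_antisymm this hw.2]
      rfl
    · rintro rfl
      exact ⟨⟨v, ⟨huv.le, le_rfl⟩, rfl⟩, hvT⟩

end Curves

/-! ### Fat subdivisions of `Θ` from long tripods -/

section FatTheta

open Set

variable {X : Type*} [MetricSpace X]

lemma IsArcIn.symm {S : Set X} {a b : X} (h : IsArcIn S a b) : IsArcIn S b a := by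
  obtain ⟨p, hp, hS⟩ := h
  refine ⟨p.symm, ?_, ?_⟩
  · intro s t hst
    exact unitInterval.symm_bijective.injective (hp hst)
  · rw [← hS]
    exact p.symm_range

/-- A curve from `o` to `x`, parametrized almost by the distance to `o`. -/
lemma IsLengthSpace.exists_ray (hX : IsLengthSpace X) {o x : X} (hox : 0 < dist o x) :
    ∃ (β : ℝ → X) (ℓ : ℝ), LipCurve β 1 ∧ dist o x ≤ ℓ ∧ ℓ ≤ dist o x + 1 ∧ β 0 = o ∧ β ℓ = x ∧
      ∀ σ, 0 ≤ σ → σ ≤ ℓ →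
        σ - 1 ≤ dist o (β σ) ∧ dist o (β σ) ≤ σ ∧ dist (β σ) x ≤ ℓ - σ := by
  obtain ⟨γ, ℓ, hγ, hℓ, h0, h1⟩ := hX.exists_lipCurve o x one_pos
  have hle : dist o x ≤ ℓ := by
    have := hγ 0 1
    rw [h0, h1] at this
    simpa using this
  have hpos : 0 < ℓ := hox.trans_le hle
  have hβ : LipCurve (fun σ => γ (σ / ℓ)) 1 := by
    intro s t
    refine (hγ _ _).trans (le_of_eq ?_)
    rw [← sub_div, abs_div, abs_of_pos hpos]
    field_simp
  have hβ0 : γ (0 / ℓ) = o := by rw [zero_div, h0]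
  have hβ1 : γ (ℓ / ℓ) = x := by rw [div_self hpos.ne', h1]
  refine ⟨fun σ => γ (σ / ℓ), ℓ, hβ, hle, hℓ, hβ0, hβ1, ?_⟩
  intro σ hσ hσ'
  have d1 := hβ 0 σ
  have d2 := hβ σ ℓ
  dsimp only at d1 d2 ⊢
  rw [hβ0, abs_of_nonpos (by linarith)] at d1
  rw [hβ1, abs_of_nonpos (by linarith)] at d2
  have d3 := dist_triangle o (γ (σ / ℓ)) x
  exact ⟨by linarith, by linarith, by linarith⟩

/-- Three long almost geodesics from `o` to far apart points `x i` which are joined by a connected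
set `T` staying far from `o` contain a `K`-fat subdivision of `Θ`: the two branch vertices are an
initial part of the tripod and the set `T`, and the three threads run along the final parts of the
legs, cut into segments of length `Q` which alternately serve as branch sets and as hosts of the
branch paths. -/
theorem exists_fat_theta (hX : IsLengthSpace X) {W : Type*} {Θ' : SimpleGraph W} {a b : W}
    {m : Fin 3 → ℕ} {g : Fin 3 → ℕ → W} (hΘ : ThetaThreads Θ' a b m g) {K : ℝ} (hK : 0 < K) :
    ∃ D : ℝ, ∀ (o : X) (x : Fin 3 → X) (T : Set X) (n : ℝ), IsCompact T → IsConnected T →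
      (∀ i, x i ∈ T) → (∀ z ∈ T, n - 3 ≤ dist o z) →
      (∀ i, n - 1 ≤ dist o (x i) ∧ dist o (x i) ≤ n) →
      (∀ i j, i ≠ j → D ≤ dist (x i) (x j)) → HasMetricFatMinor Θ' X K := by
  obtain ⟨M, hM⟩ : ∃ M, ∀ i, m i ≤ M := ⟨Finset.univ.sup m, fun i => Finset.le_sup (Finset.mem_univ i)⟩
  have hM1 : (1 : ℝ) ≤ M := by exact_mod_cast (hΘ.pos 0).trans (hM 0)
  -- `Q` is the length of the segments, and `Λ` is the length of the final part of a leg, which has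
  -- room for the at most `2 * M` segments needed
  set Q := K + 10 with hQ
  set Λ := (2 * M + 2) * Q with hΛ
  -- the final parts of two legs stay `K` apart, since each lies within `Λ + 1` of its end point
  refine ⟨K + 2 * Λ + 2, ?_⟩
  intro o x T n hTc hTconn hxT hT hx hD
  have hn : Λ + 1 ≤ n := by
    have h1 := hD 0 1 (by decide)
    have h2 := dist_triangle_left (x 0) (x 1) o
    linarith [(hx 0).2, (hx 1).2]
  have hΛ4 : 4 * Q ≤ Λ := by nlinarith
  have hray : ∀ i, ∃ (β : ℝ → X) (ℓ : ℝ), LipCurve β 1 ∧ dist o (x i) ≤ ℓ ∧ ℓ ≤ dist o (x i) + 1 ∧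
      β 0 = o ∧ β ℓ = x i ∧ ∀ σ, 0 ≤ σ → σ ≤ ℓ →
        σ - 1 ≤ dist o (β σ) ∧ dist o (β σ) ≤ σ ∧ dist (β σ) (x i) ≤ ℓ - σ :=
    fun i => hX.exists_ray (by linarith [(hx i).1])
  choose β ℓ hβ hℓ1 hℓ2 hβ0 hβ1 hray using hray
  -- the heights at which the legs are cut
  set c : ℕ → ℝ := fun k => n - Λ + k * Q with hc
  have hc0 : c 0 = n - Λ := by simp [hc]
  have cstep : ∀ k k', k < k' → c k + Q ≤ c k' := by
    intro k k' hk
    have : (k : ℝ) + 1 ≤ k' := by exact_mod_cast hk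
    simp only [hc]
    nlinarith
  have cmono : ∀ k k', k ≤ k' → c k ≤ c k' := by
    intro k k' hk
    rcases hk.eq_or_lt with rfl | h
    · exact le_rfl
    · linarith [cstep k k' h]
  have cpos : ∀ k, n - Λ ≤ c k := fun k => hc0 ▸ cmono 0 k (Nat.zero_le k)
  have ctop : ∀ i j, j < m i → c (2 * j + 1) ≤ n - 3 * Q := by
    intro i j hj
    have h1 : ((j : ℝ) + 1) ≤ M := by exact_mod_cast hj.trans_le (hM i)
    simp only [hc]
    push_cast
    nlinarith
  have c1top : c 1 ≤ n - 3 * Q := ctop 0 0 (hΘ.pos 0)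
  have hℓn : ∀ i, n - 1 ≤ ℓ i := fun i => (hx i).1.trans (hℓ1 i)
  have hℓn' : ∀ i, ℓ i ≤ n + 1 := fun i => by linarith [(hx i).2, hℓ2 i]
  -- separation by heights and separation of different legs
  have far : ∀ y z : X, dist o y + K ≤ dist o z → K ≤ dist y z := by
    intro y z h
    have := dist_triangle o y z
    linarith
  have far' : ∀ y z : X, dist o y + K ≤ dist o z → K ≤ dist z y := by
    intro y z h
    rw [dist_comm]
    exact far y z h
  have cross : ∀ i i' σ σ', i ≠ i' → n - Λ ≤ σ → σ ≤ ℓ i → n - Λ ≤ σ' → σ' ≤ ℓ i' →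
      K ≤ dist (β i σ) (β i' σ') := by
    intro i i' σ σ' hii h1 h2 h3 h4
    have d1 := (hray i σ (by linarith) h2).2.2
    have d2 := (hray i' σ' (by linarith) h4).2.2
    have d3 := hD i i' hii
    have d4 := dist_triangle4 (x i) (β i σ) (β i' σ') (x i')
    rw [dist_comm (x i) (β i σ)] at d4
    linarith [hℓn' i, hℓn' i']
  have hgt : ∀ i j σ, c j ≤ σ → σ ≤ ℓ i → c j - 1 ≤ dist o (β i σ) := by
    intro i j σ h1 h2
    have := cpos j
    linarith [(hray i σ (by linarith) h2).1]
  have hlt : ∀ i j σ, 0 ≤ σ → σ ≤ c j → σ ≤ ℓ i → dist o (β i σ) ≤ c j := by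
    intro i j σ h1 h2 h3
    linarith [(hray i σ h1 h3).2.1]
  -- the branch sets
  let A₀ : Set X := ⋃ i, β i '' Icc 0 (c 1)
  let B : W → Set X := fun w => {z | (w = a ∧ z ∈ A₀) ∨ (w = b ∧ z ∈ T) ∨
    ∃ i j, 0 < j ∧ j < m i ∧ g i j = w ∧ z ∈ β i '' Icc (c (2 * j)) (c (2 * j + 1))}
  have ga : ∀ i j, 0 < j → j < m i → g i j ≠ a := by
    intro i j h1 h2 h
    have := (hΘ.inj i j i 0 h1 h2 (Nat.zero_le _) (by rw [h, hΘ.first])).2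
    omega
  have gb : ∀ i j, 0 < j → j < m i → g i j ≠ b := by
    intro i j h1 h2 h
    have := (hΘ.inj i j i (m i) h1 h2 le_rfl (by rw [h, hΘ.last])).2
    omega
  have hBa : B a = A₀ := by
    ext z
    constructor
    · rintro (⟨-, h⟩ | ⟨h, -⟩ | ⟨i, j, h1, h2, h3, -⟩)
      · exact h
      · exact absurd h hΘ.ne
      · exact absurd h3 (ga i j h1 h2)
    · exact fun h => Or.inl ⟨rfl, h⟩
  have hBb : B b = T := by
    ext z
    constructor
    · rintro (⟨h, -⟩ | ⟨-, h⟩ | ⟨i, j, h1, h2, h3, -⟩)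
      · exact absurd h.symm hΘ.ne
      · exact h
      · exact absurd h3 (gb i j h1 h2)
    · exact fun h => Or.inr (Or.inl ⟨rfl, h⟩)
  have hBg : ∀ i j, 0 < j → j < m i → B (g i j) = β i '' Icc (c (2 * j)) (c (2 * j + 1)) := by
    intro i j hj hj'
    ext z
    constructor
    · rintro (⟨h, -⟩ | ⟨h, -⟩ | ⟨i', j', h1, h2, h3, h⟩)
      · exact absurd h (ga i j hj hj')
      · exact absurd h (gb i j hj hj')
      · obtain ⟨rfl, rfl⟩ := hΘ.inj i' j' i j h1 h2 hj'.le h3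
        exact h
    · exact fun h => Or.inr (Or.inr ⟨i, j, hj, hj', rfl, h⟩)
  have hA₀h : ∀ z ∈ A₀, dist o z ≤ c 1 := by
    intro z hz
    obtain ⟨i, σ, hσ, rfl⟩ := mem_iUnion.1 hz
    exact hlt i 1 σ hσ.1 hσ.2 (by linarith [hσ.2, hℓn i])
  have hcl : ∀ w, IsCompact (B w) := by
    intro w
    rcases hΘ.cover w with rfl | rfl | ⟨i, j, h1, h2, rfl⟩
    · rw [hBa]
      exact isCompact_iUnion fun i => isCompact_Icc.image (hβ i).continuous
    · rw [hBb]
      exact hTc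
    · rw [hBg i j h1 h2]
      exact isCompact_Icc.image (hβ i).continuous
  have hkind : ∀ w z, z ∈ B w → (w = a ∧ dist o z ≤ c 1) ∨ (w = b ∧ n - 3 ≤ dist o z) ∨
      ∃ i j σ, 0 < j ∧ j < m i ∧ w = g i j ∧ c (2 * j) ≤ σ ∧ σ ≤ c (2 * j + 1) ∧ σ ≤ ℓ i ∧
        z = β i σ := by
    rintro w z (⟨h, hz⟩ | ⟨h, hz⟩ | ⟨i, j, h1, h2, h3, σ, hσ, rfl⟩)
    · exact Or.inl ⟨h, hA₀h z hz⟩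
    · exact Or.inr (Or.inl ⟨h, hT z hz⟩)
    · exact Or.inr (Or.inr ⟨i, j, σ, h1, h2, h3.symm, hσ.1, hσ.2,
        by linarith [hσ.2, ctop i j h2, hℓn i], rfl⟩)
  have hBsep : ∀ v v', v ≠ v' → ∀ y ∈ B v, ∀ z ∈ B v', K ≤ dist y z := by
    intro v v' hvv y hy z hz
    rcases hkind v y hy with ⟨rfl, h1⟩ | ⟨rfl, h1⟩ | ⟨i, j, σ, hj, hjm, rfl, h1, h2, h3, rfl⟩ <;>
    rcases hkind v' z hz with ⟨rfl, h1'⟩ | ⟨rfl, h1'⟩ |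
      ⟨i', j', σ', hj', hjm', rfl, h1', h2', h3', rfl⟩
    · exact absurd rfl hvv
    · exact far _ _ (by linarith)
    · exact far _ _ (by linarith [hgt i' _ σ' h1' h3', cstep 1 (2 * j') (by omega)])
    · exact far' _ _ (by linarith)
    · exact absurd rfl hvv
    · exact far' _ _ (by
        linarith [hlt i' _ σ' (by linarith [cpos (2 * j')]) h2' h3', ctop i' j' hjm'])
    · exact far' _ _ (by linarith [hgt i _ σ h1 h3, cstep 1 (2 * j) (by omega)])
    · exact far _ _ (by
        linarith [hlt i _ σ (by linarith [cpos (2 * j)]) h2 h3, ctop i j hjm])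
    · by_cases hii : i = i'
      · subst hii
        rcases lt_trichotomy j j' with hlt' | rfl | hlt'
        · exact far _ _ (by
            linarith [hlt i _ σ (by linarith [cpos (2 * j)]) h2 h3, hgt i _ σ' h1' h3',
              cstep (2 * j + 1) (2 * j') (by omega)])
        · exact absurd rfl hvv
        · exact far' _ _ (by
            linarith [hlt i _ σ' (by linarith [cpos (2 * j')]) h2' h3', hgt i _ σ h1 h3,
              cstep (2 * j' + 1) (2 * j) (by omega)])
      · exact cross i i' σ σ' hii ((cpos _).trans h1) h3 ((cpos _).trans h1') h3'
  have disj : ∀ S S' : Set X, (∀ y ∈ S, ∀ z ∈ S', K ≤ dist y z) → Disjoint S S' := by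
    intro S S' h
    rw [disjoint_left]
    intro z hz hz'
    have := h z hz z hz'
    rw [dist_self] at this
    linarith
  -- the branch paths
  have hstart : ∀ i j, j < m i → β i (c (2 * j + 1)) ∈ B (g i j) := by
    intro i j hj
    rcases Nat.eq_zero_or_pos j with rfl | hpos
    · rw [hΘ.first, hBa]
      exact mem_iUnion.2 ⟨i, c 1, ⟨by linarith [cpos 1], le_rfl⟩, rfl⟩
    · rw [hBg i j hpos hj]
      exact ⟨_, ⟨cmono _ _ (by omega), le_rfl⟩, rfl⟩
  have harc : ∀ i j, ∃ A : Set X, j < m i → ∃ p ∈ B (g i j), ∃ q ∈ B (g i (j + 1)),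
      IsArcIn A p q ∧ A ∩ B (g i j) = {p} ∧ A ∩ B (g i (j + 1)) = {q} ∧
      ∀ z ∈ A, ∃ σ, c (2 * j + 1) ≤ σ ∧ σ ≤ ℓ i ∧ (j + 1 < m i → σ ≤ c (2 * j + 2)) ∧
        z = β i σ := by
    intro i j
    by_cases hj : j < m i
    swap
    · exact ⟨∅, fun h => absurd h hj⟩
    have hne : g i j ≠ g i (j + 1) := by
      intro h
      rcases Nat.eq_zero_or_pos j with rfl | hpos
      · rcases (show 0 + 1 ≤ m i from hj).eq_or_lt with heq | hlt'
        · rw [heq, hΘ.first, hΘ.last] at h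
          exact hΘ.ne h
        · have := (hΘ.inj i (0 + 1) i 0 (by omega) hlt' (by omega) h.symm).2
          omega
      · have := (hΘ.inj i j i (j + 1) hpos hj hj h).2
        omega
    have hd := disj _ _ (hBsep _ _ hne)
    by_cases hlast : j + 1 < m i
    · have hend : β i (c (2 * j + 2)) ∈ B (g i (j + 1)) := by
        rw [hBg i (j + 1) (by omega) hlast]
        exact ⟨_, ⟨cmono _ _ (by omega), cmono _ _ (by omega)⟩, rfl⟩
      obtain ⟨p, hp, q, hq, A, hA, hsub, h1, h2⟩ := exists_arc_between (hβ i)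
        (cmono (2 * j + 1) (2 * j + 2) (by omega)) (hcl _).isClosed (hcl _).isClosed hd
        (hstart i j hj) hend
      refine ⟨A, fun _ => ⟨p, hp, q, hq, hA, h1, h2, fun z hz => ?_⟩⟩
      obtain ⟨σ, hσ, rfl⟩ := hsub hz
      have e1 := ctop i (j + 1) hlast
      have e2 := cmono (2 * j + 2) (2 * (j + 1) + 1) (by omega)
      exact ⟨σ, hσ.1, by linarith [hσ.2, hℓn i], fun _ => hσ.2, rfl⟩
    · have hjm : j + 1 = m i := by omega
      have hend : β i (ℓ i) ∈ B (g i (j + 1)) := by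
        rw [hjm, hΘ.last, hBb, hβ1]
        exact hxT i
      obtain ⟨p, hp, q, hq, A, hA, hsub, h1, h2⟩ := exists_arc_between (hβ i)
        (show c (2 * j + 1) ≤ ℓ i by linarith [ctop i j hj, hℓn i])
        (hcl _).isClosed (hcl _).isClosed hd (hstart i j hj) hend
      refine ⟨A, fun _ => ⟨p, hp, q, hq, hA, h1, h2, fun z hz => ?_⟩⟩
      obtain ⟨σ, hσ, rfl⟩ := hsub hz
      exact ⟨σ, hσ.1, hσ.2, fun h => absurd h hlast, rfl⟩
  choose A hA using harc
  have hAsep : ∀ i j i' j', j < m i → j' < m i' → ¬ (i = i' ∧ j = j') → ∀ y ∈ A i j, ∀ z ∈ A i' j',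
      K ≤ dist y z := by
    intro i j i' j' hj hj' hne y hy z hz
    obtain ⟨-, -, -, -, -, -, -, h⟩ := hA i j hj
    obtain ⟨-, -, -, -, -, -, -, h'⟩ := hA i' j' hj'
    obtain ⟨σ, h1, h2, h3, rfl⟩ := h y hy
    obtain ⟨σ', h1', h2', h3', rfl⟩ := h' z hz
    by_cases hii : i = i'
    · subst hii
      rcases lt_trichotomy j j' with hlt' | rfl | hlt'
      · exact far _ _ (by
          linarith [hlt i _ σ (by linarith [cpos (2 * j + 1)]) (h3 (by omega)) h2,
            hgt i _ σ' h1' h2', cstep (2 * j + 2) (2 * j' + 1) (by omega)])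
      · exact absurd ⟨rfl, rfl⟩ hne
      · exact far' _ _ (by
          linarith [hlt i _ σ' (by linarith [cpos (2 * j' + 1)]) (h3' (by omega)) h2',
            hgt i _ σ h1 h2, cstep (2 * j' + 2) (2 * j + 1) (by omega)])
    · exact cross i i' σ σ' hii ((cpos _).trans h1) h2 ((cpos _).trans h1') h2'
  have hABsep : ∀ i j v, j < m i → v ≠ g i j → v ≠ g i (j + 1) → ∀ y ∈ A i j, ∀ z ∈ B v,
      K ≤ dist y z := by
    intro i j v hj hv hv' y hy z hz
    obtain ⟨-, -, -, -, -, -, -, h⟩ := hA i j hj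
    obtain ⟨σ, h1, h2, h3, rfl⟩ := h y hy
    rcases hkind v z hz with ⟨rfl, h1'⟩ | ⟨rfl, h1'⟩ | ⟨i', j', σ', hj', hjm', rfl, h1', h2', h3', rfl⟩
    · have : j ≠ 0 := by
        rintro rfl
        exact hv (hΘ.first i).symm
      exact far' _ _ (by linarith [hgt i _ σ h1 h2, cstep 1 (2 * j + 1) (by omega)])
    · have : j + 1 ≠ m i := by
        intro hjm
        rw [hjm] at hv'
        exact hv' (hΘ.last i).symm
      have e1 := ctop i (j + 1) (by omega)
      have e2 := cmono (2 * j + 2) (2 * (j + 1) + 1) (by omega)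
      exact far _ _ (by
        linarith [hlt i _ σ (by linarith [cpos (2 * j + 1)]) (h3 (by omega)) h2])
    · by_cases hii : i' = i
      · subst hii
        have n1 : j' ≠ j := fun h => hv (by rw [h])
        have n2 : j' ≠ j + 1 := fun h => hv' (by rw [h])
        rcases lt_or_gt_of_ne n1 with hlt' | hlt'
        · exact far' _ _ (by
            linarith [hlt i' _ σ' (by linarith [cpos (2 * j')]) h2' h3', hgt i' _ σ h1 h2,
              cstep (2 * j' + 1) (2 * j + 1) (by omega)])
        · exact far _ _ (by
            linarith [hlt i' _ σ (by linarith [cpos (2 * j + 1)]) (h3 (by omega)) h2,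
              hgt i' _ σ' h1' h3', cstep (2 * j + 2) (2 * j') (by omega)])
      · exact cross i i' σ σ' (Ne.symm hii) ((cpos _).trans h1) h2 ((cpos _).trans h1') h3'
  have hedge : ∀ e : Sym2 W, ∃ q : Fin 3 × ℕ, e ∈ Θ'.edgeSet →
      q.2 < m q.1 ∧ e = s(g q.1 q.2, g q.1 (q.2 + 1)) := by
    intro e
    by_cases he : e ∈ Θ'.edgeSet
    · obtain ⟨i, j, h⟩ := hΘ.edges e he
      exact ⟨(i, j), fun _ => h⟩
    · exact ⟨(0, 0), fun h => absurd h he⟩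
  choose q hq using hedge
  have hPsep : ∀ e ∈ Θ'.edgeSet, ∀ e' ∈ Θ'.edgeSet, e ≠ e' →
      ∀ y ∈ A (q e).1 (q e).2, ∀ z ∈ A (q e').1 (q e').2, K ≤ dist y z := by
    intro e he e' he' hee
    refine hAsep _ _ _ _ (hq e he).1 (hq e' he').1 ?_
    rintro ⟨h1, h2⟩
    apply hee
    rw [(hq e he).2, (hq e' he').2, h1, h2]
  have hPBsep : ∀ u w, Θ'.Adj u w → ∀ v, v ≠ u → v ≠ w →
      ∀ y ∈ A (q s(u, w)).1 (q s(u, w)).2, ∀ z ∈ B v, K ≤ dist y z := by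
    intro u w huw v hvu hvw
    obtain ⟨h1, h2⟩ := hq s(u, w) huw
    refine hABsep _ _ v h1 ?_ ?_
    · rintro rfl
      rcases Sym2.eq_iff.1 h2 with h | h
      · exact hvu h.1.symm
      · exact hvw h.2.symm
    · rintro rfl
      rcases Sym2.eq_iff.1 h2 with h | h
      · exact hvw h.2.symm
      · exact hvu h.1.symm
  refine ⟨B, fun e => A (q e).1 (q e).2, ?_, fun v v' h => disj _ _ (hBsep v v' h), ?_,
    fun e he e' he' h => disj _ _ (hPsep e he e' he' h), hBsep, hPsep, hPBsep⟩
  · intro w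
    rcases hΘ.cover w with rfl | rfl | ⟨i, j, h1, h2, rfl⟩
    · rw [hBa]
      have h0 : ∀ i, o ∈ β i '' Icc 0 (c 1) := fun i =>
        ⟨0, ⟨le_rfl, by linarith [cpos 1]⟩, hβ0 i⟩
      refine ⟨⟨o, mem_iUnion.2 ⟨0, h0 0⟩⟩, isPreconnected_iUnion ⟨o, mem_iInter.2 h0⟩ fun i => ?_⟩
      exact isPreconnected_Icc.image _ (hβ i).continuous.continuousOn
    · rw [hBb]
      exact hTconn
    · rw [hBg i j h1 h2]
      exact (isConnected_Icc (cmono _ _ (by omega))).image _ (hβ i).continuous.continuousOn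
  · intro u w huw
    obtain ⟨h1, h2⟩ := hq s(u, w) huw
    obtain ⟨p, hp, p', hp', harc, hi, hi', -⟩ := hA _ _ h1
    have hmeet : A (q s(u, w)).1 (q s(u, w)).2 ∩ ⋃ v, B v = {p, p'} := by
      ext z
      constructor
      · rintro ⟨hz, hz'⟩
        obtain ⟨v, hv⟩ := mem_iUnion.1 hz'
        by_cases e1 : v = g (q s(u, w)).1 (q s(u, w)).2
        · subst e1
          have : z ∈ ({p} : Set X) := hi ▸ ⟨hz, hv⟩
          exact Or.inl this
        · by_cases e2 : v = g (q s(u, w)).1 ((q s(u, w)).2 + 1)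
          · subst e2
            have : z ∈ ({p'} : Set X) := hi' ▸ ⟨hz, hv⟩
            exact Or.inr this
          · exact absurd hv (disjoint_left.1 (disj _ _ (hABsep _ _ v h1 e1 e2)) hz)
      · have m1 : p ∈ A (q s(u, w)).1 (q s(u, w)).2 :=
          (show p ∈ _ ∩ _ from hi.symm ▸ rfl : p ∈ A _ _ ∩ B (g (q s(u, w)).1 (q s(u, w)).2)).1
        have m2 : p' ∈ A (q s(u, w)).1 (q s(u, w)).2 :=
          (show p' ∈ _ ∩ _ from hi'.symm ▸ rfl :
            p' ∈ A _ _ ∩ B (g (q s(u, w)).1 ((q s(u, w)).2 + 1))).1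
        rintro (rfl | rfl)
        · exact ⟨m1, mem_iUnion.2 ⟨_, hp⟩⟩
        · exact ⟨m2, mem_iUnion.2 ⟨_, hp'⟩⟩
    rcases Sym2.eq_iff.1 h2 with ⟨e1, e2⟩ | ⟨e1, e2⟩
    · exact ⟨p, e1 ▸ hp, p', e2 ▸ hp', harc, hmeet⟩
    · exact ⟨p', e1 ▸ hp', p, e2 ▸ hp, harc.symm, by rw [hmeet, pair_comm]⟩

end FatTheta

/-! ### A local criterion for being a cactus -/

section CactusCriterion

open SimpleGraph

lemma cycle_nbr_le_two {V : Type*} {H : SimpleGraph V} {a x y₁ y₂ y₃ : V} {c : H.Walk a a}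
    (hc : c.IsCycle) (h₁ : s(x, y₁) ∈ c.edges) (h₂ : s(x, y₂) ∈ c.edges)
    (h₃ : s(x, y₃) ∈ c.edges) : y₁ = y₂ ∨ y₁ = y₃ ∨ y₂ = y₃ := by
  classical
  have hx : x ∈ c.support := c.fst_mem_support_of_mem_edges h₁
  have h2 := hc.ncard_neighborSet_toSubgraph_eq_two hx
  obtain ⟨u, v, -, huv⟩ := Set.ncard_eq_two.mp h2
  have m : ∀ y, s(x, y) ∈ c.edges → y = u ∨ y = v := by
    intro y hy
    have : y ∈ c.toSubgraph.neighborSet x := by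
      simpa [Subgraph.mem_neighborSet, Walk.adj_toSubgraph_iff_mem_edges] using hy
    simpa [huv] using this
  have := m _ h₁
  have := m _ h₂
  have := m _ h₃
  grind

lemma cycle_other_nbr {V : Type*} {H : SimpleGraph V} {a x y : V} {c : H.Walk a a}
    (hc : c.IsCycle) (h₁ : s(x, y) ∈ c.edges) : ∃ y', y' ≠ y ∧ s(x, y') ∈ c.edges := by
  classical
  have hx : x ∈ c.support := c.fst_mem_support_of_mem_edges h₁
  have h2 := hc.ncard_neighborSet_toSubgraph_eq_two hx
  obtain ⟨u, v, hne, huv⟩ := Set.ncard_eq_two.mp h2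
  have m : ∀ y, y = u ∨ y = v → s(x, y) ∈ c.edges := by
    intro y hy
    have : y ∈ c.toSubgraph.neighborSet x := by rw [huv]; simpa using hy
    simpa [Subgraph.mem_neighborSet, Walk.adj_toSubgraph_iff_mem_edges] using this
  by_cases h : y = u
  · exact ⟨v, by grind, m v (Or.inr rfl)⟩
  · exact ⟨u, by grind, m u (Or.inl rfl)⟩

/-- A cycle crosses every cut at least twice: if it uses the edge `ab` leaving `U`, then it
uses a second edge leaving `U`. -/
lemma cycle_cut {V : Type*} {H : SimpleGraph V} {a b r : V} {c : H.Walk r r}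
    (hc : c.IsCycle) (h : s(a, b) ∈ c.edges) (U : Set V) (ha : a ∈ U) (hb : b ∉ U) :
    ∃ a' b', a' ∈ U ∧ b' ∉ U ∧ s(a', b') ∈ c.edges ∧ s(a', b') ≠ s(a, b) := by
  classical
  have hadj : H.Adj a b := c.adj_of_mem_edges h
  -- the remainder of the cycle is a walk from `a` to `b` avoiding the edge `ab`
  obtain ⟨q, hq, hq'⟩ : ∃ q : H.Walk a b, (∀ e ∈ q.edges, e ∈ c.edges) ∧ s(a, b) ∉ q.edges := by
    have hx : a ∈ c.support := c.fst_mem_support_of_mem_edges h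
    have hrot : ∀ e ∈ (c.rotate a hx).edges, e ∈ c.edges := fun e he =>
      (c.rotate_edges a hx).mem_iff.mp he
    have hrot' : s(a, b) ∈ (c.rotate a hx).edges := (c.rotate_edges a hx).mem_iff.mpr h
    have hcy := hc.rotate hx
    revert hrot hrot' hcy
    generalize c.rotate a hx = d
    intro hd hab hdc
    have hb' : b ∈ d.support := d.snd_mem_support_of_mem_edges hab
    have hspec := d.take_spec hb'
    have hnd : ((d.takeUntil b hb').edges ++ (d.dropUntil b hb').edges).Nodup := by
      rw [← Walk.edges_append, hspec]; exact hdc.isTrail.edges_nodup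
    have hmem : ∀ e, e ∈ d.edges ↔
        e ∈ (d.takeUntil b hb').edges ∨ e ∈ (d.dropUntil b hb').edges := by
      intro e
      rw [← List.mem_append, ← Walk.edges_append, hspec]
    by_cases h1 : s(a, b) ∈ (d.takeUntil b hb').edges
    · refine ⟨(d.dropUntil b hb').reverse, fun e he => hd _ ((hmem e).2 (Or.inr (by simpa using he))), ?_⟩
      intro h2
      simp only [Walk.edges_reverse, List.mem_reverse] at h2
      exact (List.disjoint_of_nodup_append hnd) h1 h2
    · exact ⟨d.takeUntil b hb', fun e he => hd _ ((hmem e).2 (Or.inl he)), h1⟩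
  obtain ⟨d, hd, hd1, hd2⟩ := q.exists_boundary_dart U ha hb
  have he : s(d.fst, d.snd) ∈ q.edges := List.mem_map.mpr ⟨d, hd, rfl⟩
  exact ⟨d.fst, d.snd, hd1, hd2, hq _ he, fun h => hq' (h ▸ he)⟩

/-- If a cycle is determined by each of its edges, then the graph is a cactus: two
edge-disjoint cycles through `u ≠ v` would allow a third cycle mixing edges of both. -/
theorem isCactus_of_edge_determined {V : Type*} {H : SimpleGraph V} (hH : H.Connected)
    (hE : ∀ (a b : V) (c₁ : H.Walk a a) (c₂ : H.Walk b b), c₁.IsCycle → c₂.IsCycle →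
      ∀ e ∈ c₁.edges, e ∈ c₂.edges → ∀ e' ∈ c₁.edges, e' ∈ c₂.edges) : IsCactus H := by
  classical
  refine ⟨hH, ?_⟩
  intro a b c₁ c₂ h₁ h₂ hne u hu v hv
  by_contra huv
  have hdisj : ∀ e ∈ c₁.edges, e ∉ c₂.edges := by
    intro e he he'
    apply hne
    ext e'
    exact ⟨hE _ _ _ _ h₁ h₂ e he he' e', hE _ _ _ _ h₂ h₁ e he' he e'⟩
  have m₁ : ∀ e, e ∈ (c₁.rotate u hu.1).edges ↔ e ∈ c₁.edges := fun e =>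
      (c₁.rotate_edges u hu.1).mem_iff
  have m₂ : ∀ e, e ∈ (c₂.rotate u hu.2).edges ↔ e ∈ c₂.edges := fun e =>
      (c₂.rotate_edges u hu.2).mem_iff
  have r₁ := h₁.rotate hu.1
  have hv₁ : v ∈ (c₁.rotate u hu.1).support := (c₁.mem_support_rotate_iff u hu.1).mpr hv.1
  have hv₂ : v ∈ (c₂.rotate u hu.2).support := (c₂.mem_support_rotate_iff u hu.2).mpr hv.2
  revert m₁ m₂ r₁ hv₁ hv₂
  generalize c₁.rotate u hu.1 = d₁
  generalize c₂.rotate u hu.2 = d₂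
  intro m₁ m₂ r₁ hv₁ hv₂
  have hspec := d₁.take_spec hv₁
  have hnd : ((d₁.takeUntil v hv₁).edges ++ (d₁.dropUntil v hv₁).edges).Nodup := by
    rw [← Walk.edges_append, hspec]; exact r₁.isTrail.edges_nodup
  have hmem : ∀ e, e ∈ d₁.edges ↔
      e ∈ (d₁.takeUntil v hv₁).edges ∨ e ∈ (d₁.dropUntil v hv₁).edges := by
    intro e
    rw [← List.mem_append, ← Walk.edges_append, hspec]
  revert hnd hmem
  generalize d₁.takeUntil v hv₁ = α
  generalize d₁.dropUntil v hv₁ = α'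
  have hβ : ∀ e ∈ (d₂.takeUntil v hv₂).edges, e ∈ c₂.edges := fun e he =>
    (m₂ e).1 (d₂.edges_takeUntil_subset_edges hv₂ he)
  revert hβ
  generalize d₂.takeUntil v hv₂ = β
  intro hβ hnd hmem
  cases α with
  | nil => exact huv rfl
  | @cons _ x _ hux α₂ =>
    have e₁ : s(u, x) ∈ c₁.edges := (m₁ _).1 ((hmem _).2 (by simp))
    have hα₂ : s(u, x) ∉ α₂.edges := by
      intro h
      simp only [Walk.edges_cons, List.cons_append, List.nodup_cons, List.mem_append] at hnd
      exact hnd.1 (Or.inl h)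
    have hw : ∀ e ∈ (α₂.append β.reverse).bypass.edges, e ∈ α₂.edges ∨ e ∈ β.edges := by
      intro e he
      have := Walk.edges_bypass_subset_edges _ he
      simpa using this
    have hcyc : (Walk.cons hux (α₂.append β.reverse).bypass).IsCycle := by
      rw [Walk.cons_isCycle_iff]
      refine ⟨Walk.bypass_isPath _, fun h => ?_⟩
      rcases hw _ h with h | h
      · exact hα₂ h
      · exact hdisj _ e₁ (hβ _ h)
    have hsub := hE _ _ _ _ h₁ hcyc _ e₁ (by simp)
    cases α' with
    | nil => exact huv rfl
    | @cons _ y _ hvy α₃ =>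
      have e₂ : s(v, y) ∈ c₁.edges := (m₁ _).1 ((hmem _).2 (by simp))
      have hin : s(v, y) ∈ s(u, x) :: α₂.edges := by
        have := hsub _ e₂
        simp only [Walk.edges_cons, List.mem_cons] at this
        rcases this with h | h
        · simp only [List.mem_cons]; exact Or.inl h
        · rcases hw _ h with h | h
          · simp only [List.mem_cons]; exact Or.inr h
          · exact absurd (hβ _ h) (hdisj _ e₂)
      exact (List.disjoint_of_nodup_append hnd) (a := s(v, y)) (by rw [Walk.edges_cons]; exact hin) (by simp)

/-- The combinatorial skeleton of the graphs built below. `D a b` says that `b` is a lower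
neighbour of `a`, and `R` is an equivalence relation whose classes (clusters) form a tree. The
edges going down from a cluster form a cut. -/
structure ClusterTree {V : Type*} (H : SimpleGraph V) (R D : V → V → Prop) : Prop where
  equiv : Equivalence R
  adj_iff : ∀ a b, H.Adj a b ↔ D a b ∨ D b a
  asymm : ∀ a b, D a b → ¬ D b a
  parent : ∀ a a' b b', R a a' → D a b → D a' b' → R b b'
  le_two : ∀ a a' a'', R a a' → R a a'' → (a = a' ∨ a = a'' ∨ a' = a'')
  /-- A member of a two-element cluster has at most one lower neighbour. -/
  down_unique : ∀ a a' b b', R a a' → a ≠ a' → D a b → D a b' → (b = b')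
  /-- At most one child cluster is attached to both members of a two-element cluster. -/
  link_unique : ∀ a₁ a₁' a₂ a₂' p q, D a₁ p → D a₁' q → D a₂ p → D a₂' q → p ≠ q →
    R a₁ a₁' → R a₂ a₂' → R a₁ a₂
  cut : ∀ a, ∃ U : Set V, (∀ x, R a x → x ∈ U) ∧
    (∀ x ∈ U, ∀ y ∉ U, H.Adj x y → R a x ∧ D x y) ∧ (∀ x y, R a x → D x y → y ∉ U)

namespace ClusterTree

variable {V : Type*} {H : SimpleGraph V} {R D : V → V → Prop}

/-- At most two edges go down from a cluster. -/
lemma fiber_two (T : ClusterTree H R D) {a b a₁ b₁ a₂ b₂ : V} (h : D a b) (h₁ : D a₁ b₁)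
    (h₂ : D a₂ b₂) (r₁ : R a a₁) (r₂ : R a a₂) :
    (a = a₁ ∧ b = b₁) ∨ (a = a₂ ∧ b = b₂) ∨ (a₁ = a₂ ∧ b₁ = b₂) := by
  have hA := T.le_two _ _ _ r₁ r₂
  have hB := T.le_two _ _ _ (T.parent _ _ _ _ r₁ h h₁) (T.parent _ _ _ _ r₂ h h₂)
  have r₁' := T.equiv.symm r₁
  have r₂' := T.equiv.symm r₂
  have r₁₂ := T.equiv.trans r₁' r₂
  have := T.down_unique
  by_cases h1 : a = a₁
  · subst h1
    by_cases h2 : a = a₂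
    · subst h2; grind
    · have := T.down_unique _ _ _ _ r₂ h2 h h₁; grind
  · by_cases h2 : a = a₂
    · subst h2; have := T.down_unique _ _ _ _ r₁ h1 h h₂; grind
    · have h3 : a₁ = a₂ := by grind
      subst h3
      have := T.down_unique _ _ _ _ r₁' (Ne.symm h1) h₁ h₂; grind

/-- A cycle using an edge going down from a cluster uses another one. -/
lemma second (T : ClusterTree H R D) {r : V} {c : H.Walk r r} (hc : c.IsCycle) {a b : V}
    (h : D a b) (hm : s(a, b) ∈ c.edges) :
    ∃ a' b', R a a' ∧ D a' b' ∧ s(a', b') ∈ c.edges ∧ ¬ (a' = a ∧ b' = b) := by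
  obtain ⟨U, h1, h2, h3⟩ := T.cut a
  have ra := T.equiv.refl a
  obtain ⟨a', b', ha', hb', hm', hne⟩ := cycle_cut hc hm U (h1 _ ra) (h3 _ _ ra h)
  obtain ⟨hr, hd⟩ := h2 _ ha' _ hb' (c.adj_of_mem_edges hm')
  exact ⟨a', b', hr, hd, hm', fun h => hne (by rw [h.1, h.2])⟩

/-- A cycle using an edge going down from a cluster uses all such edges. -/
lemma full (T : ClusterTree H R D) {r : V} {c : H.Walk r r} (hc : c.IsCycle) {a b a' b' : V}
    (h : D a b) (hm : s(a, b) ∈ c.edges) (h' : D a' b') (hr : R a a') : s(a', b') ∈ c.edges := by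
  obtain ⟨a₁, b₁, r₁, h₁, hm₁, hne⟩ := T.second hc h hm
  have := T.fiber_two h h₁ h' r₁ hr
  grind

/-- If two cycles share an edge at `x`, then they share both of their edges at `x`. -/
lemma step (T : ClusterTree H R D) {r₁ r₂ : V} {c₁ : H.Walk r₁ r₁} {c₂ : H.Walk r₂ r₂}
    (hc₁ : c₁.IsCycle) (hc₂ : c₂.IsCycle) {x y y' : V} (h₁ : s(x, y) ∈ c₁.edges)
    (h₂ : s(x, y) ∈ c₂.edges) (h : s(x, y') ∈ c₁.edges) : s(x, y') ∈ c₂.edges := by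
  by_cases hyy : y = y'
  · rwa [← hyy]
  have sw : ∀ {u v : V} {r : V} {c : H.Walk r r}, s(u, v) ∈ c.edges → s(v, u) ∈ c.edges := by
    intro u v r c h; rwa [Sym2.eq_swap]
  -- an edge entering `x` from above, on a cycle also using an edge leaving `x` downwards, comes
  -- from a cluster that is attached to a second vertex of the cluster of `x`
  have link : ∀ {r : V} {c : H.Walk r r}, c.IsCycle → ∀ {u v : V}, s(x, u) ∈ c.edges →
      s(x, v) ∈ c.edges → D x u → D v x → ∃ a b, R v a ∧ D a b ∧ b ≠ x ∧ R x b ∧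
        s(a, b) ∈ c.edges := by
    intro r c hc u v hu hv hxu hvx
    obtain ⟨a, b, ra, hab, hm, hne⟩ := T.second hc hvx (sw hv)
    refine ⟨a, b, ra, hab, ?_, T.parent _ _ _ _ ra hvx hab, hm⟩
    rintro rfl
    have := cycle_nbr_le_two hc hu hv (sw hm)
    have h1 := T.asymm _ _ hxu
    have h2 := T.asymm _ _ hvx
    have h3 := T.asymm _ _ hab
    grind
  have linkup : ∀ {r : V} {c : H.Walk r r}, c.IsCycle → ∀ {u v : V}, s(x, u) ∈ c.edges →
      s(x, v) ∈ c.edges → D u x → D v x → u ≠ v → ¬ R u v → ∃ a b, R v a ∧ D a b ∧ b ≠ x ∧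
        R x b := by
    intro r c hc u v hu hv hxu hvx huv hR
    obtain ⟨a, b, ra, hab, hm, hne⟩ := T.second hc hvx (sw hv)
    refine ⟨a, b, ra, hab, ?_, T.parent _ _ _ _ ra hvx hab⟩
    rintro rfl
    have := cycle_nbr_le_two hc hu hv (sw hm)
    have hR' : a ≠ u := by rintro rfl; exact hR (T.equiv.symm ra)
    grind
  have same : ∀ {b₁ b₂ : V}, R x b₁ → R x b₂ → b₁ ≠ x → b₂ ≠ x → b₁ = b₂ := by
    intro b₁ b₂ h1 h2 h3 h4
    have := T.le_two _ _ _ h1 h2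
    grind
  rcases (T.adj_iff _ _).1 (c₁.adj_of_mem_edges h₁) with hxy | hyx <;>
  rcases (T.adj_iff _ _).1 (c₁.adj_of_mem_edges h) with hxy' | hyx'
  · exact T.full hc₂ hxy h₂ hxy' (T.equiv.refl x)
  · obtain ⟨a₁, b₁, ra₁, d₁, n₁, rb₁, -⟩ := link hc₁ h₁ h hxy hyx'
    obtain ⟨y₂, hy₂, m₂⟩ := cycle_other_nbr hc₂ h₂
    rcases (T.adj_iff _ _).1 (c₂.adj_of_mem_edges m₂) with hd | hd
    · exact absurd (T.down_unique _ _ _ _ rb₁ n₁.symm hxy hd).symm hy₂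
    · obtain ⟨a₂, b₂, ra₂, d₂, n₂, rb₂, -⟩ := link hc₂ h₂ m₂ hxy hd
      obtain rfl := same rb₁ rb₂ n₁ n₂
      have := T.link_unique _ _ _ _ _ _ hd d₂ hyx' d₁ n₁.symm ra₂ ra₁
      exact sw (T.full hc₂ hd (sw m₂) hyx' this)
  · obtain ⟨a₁, b₁, ra₁, d₁, n₁, rb₁, -⟩ := link hc₁ h h₁ hxy' hyx
    obtain ⟨y₂, hy₂, m₂⟩ := cycle_other_nbr hc₂ h₂
    rcases (T.adj_iff _ _).1 (c₂.adj_of_mem_edges m₂) with hd | hd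
    · rwa [T.down_unique _ _ _ _ rb₁ n₁.symm hxy' hd]
    · exfalso
      have hn : ¬ R y y₂ := by
        intro hr
        have := T.fiber_two hyx hd d₁ hr ra₁
        grind
      obtain ⟨a₂, b₂, ra₂, d₂, n₂, rb₂⟩ := linkup hc₂ h₂ m₂ hyx hd hy₂.symm hn
      obtain rfl := same rb₁ rb₂ n₁ n₂
      exact hn (T.link_unique _ _ _ _ _ _ hyx d₁ hd d₂ n₁.symm ra₁ ra₂)
  · by_cases hR : R y y'
    · exact sw (T.full hc₂ hyx (sw h₂) hyx' hR)
    · exfalso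
      obtain ⟨a₁, b₁, ra₁, d₁, n₁, rb₁⟩ := linkup hc₁ h₁ h hyx hyx' hyy hR
      obtain ⟨a₂, b₂, ra₂, d₂, n₂, rb₂⟩ := linkup hc₁ h h₁ hyx' hyx (Ne.symm hyy)
        (fun h => hR (T.equiv.symm h))
      obtain rfl := same rb₁ rb₂ n₁ n₂
      exact hR (T.link_unique _ _ _ _ _ _ hyx d₂ hyx' d₁ n₁.symm ra₂ ra₁)

/-- By `step`, a cycle sharing an edge with another one follows it all the way round. -/
theorem isCactus (T : ClusterTree H R D) (hH : H.Connected) : IsCactus H := by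
  classical
  refine isCactus_of_edge_determined hH ?_
  intro a b c₁ c₂ h₁ h₂ e he he'
  have walk : ∀ {u v : V} (p : H.Walk u v), (∀ e ∈ p.edges, e ∈ c₁.edges) →
      (∃ y, s(u, y) ∈ c₁.edges ∧ s(u, y) ∈ c₂.edges) → ∀ e ∈ p.edges, e ∈ c₂.edges := by
    intro u v p
    induction p with
    | nil => intro _ _ e he; simp at he
    | @cons u w v hadj p ih =>
      intro hp ⟨y, hy₁, hy₂⟩ e he
      have hm := hp s(u, w) (by simp)
      have hm₂ := T.step h₁ h₂ hy₁ hy₂ hm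
      simp only [Walk.edges_cons, List.mem_cons] at he
      rcases he with rfl | he
      · exact hm₂
      · refine ih (fun e he => hp e (by simp [he])) ⟨u, ?_, ?_⟩ e he
        · rwa [Sym2.eq_swap]
        · rwa [Sym2.eq_swap]
  intro e₁ he₁
  induction e using Sym2.ind with
  | _ x y =>
    have hx := c₁.fst_mem_support_of_mem_edges he
    exact walk (c₁.rotate x hx) (fun e he => (c₁.rotate_edges x hx).mem_iff.mp he)
      ⟨y, he, he'⟩ e₁ ((c₁.rotate_edges x hx).mem_iff.mpr he₁)

end ClusterTree

end CactusCriterion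

/-! ### Splitting the clusters of a layering into at most two pieces -/

namespace Layer

open SimpleGraph

variable {X : Type} (G : SimpleGraph X)

/-- `u` and `v` are joined by a walk all of whose vertices have distance at least `n`
from `o`. -/
def Conn (o : X) (n : ℕ) (u v : X) : Prop :=
  ∃ p : G.Walk u v, ∀ w ∈ p.support, n ≤ G.dist o w

/-- The tripod property: among any three points of a sphere that are connected to each other
outside the corresponding open ball, two are at distance less than `L`. -/
def Tripod (L : ℕ) : Prop :=
  ∀ (o : X) (n : ℕ) (x y z : X), G.dist o x = n → G.dist o y = n → G.dist o z = n →
    Conn G o n x y → Conn G o n y z → G.dist x y < L ∨ G.dist y z < L ∨ G.dist x z < L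

/-- `v` and `w` lie in the same cluster of the layering with root `o`. -/
def Rel (o : X) (v w : X) : Prop := G.dist o v = G.dist o w ∧ Conn G o (G.dist o v) v w

/-- The cluster of `v` has diameter at most `M`. -/
def Small (o : X) (M : ℕ) (v : X) : Prop :=
  ∀ x y, Rel G o v x → Rel G o v y → G.dist x y ≤ M

/-- `v` and `w` lie in the same piece: clusters of diameter at most `M` consist of a single piece,
the other ones split into sets of diameter less than `L`. -/
def Piece (o : X) (M L : ℕ) (v w : X) : Prop :=
  Rel G o v w ∧ (G.dist v w < L ∨ Small G o M v)

variable {G} {o : X} {n : ℕ} {u v w : X} {M L : ℕ}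

lemma Conn.refl (h : n ≤ G.dist o u) : Conn G o n u u := ⟨Walk.nil, by simpa using h⟩

lemma Conn.symm (h : Conn G o n u v) : Conn G o n v u := by
  obtain ⟨p, hp⟩ := h
  exact ⟨p.reverse, by simpa using hp⟩

lemma Conn.trans (h : Conn G o n u v) (h' : Conn G o n v w) : Conn G o n u w := by
  obtain ⟨p, hp⟩ := h
  obtain ⟨q, hq⟩ := h'
  refine ⟨p.append q, fun x hx => ?_⟩
  rw [Walk.mem_support_append_iff] at hx
  exact hx.elim (hp x) (hq x)

lemma Conn.of_adj (h : G.Adj u v) (hu : n ≤ G.dist o u) (hv : n ≤ G.dist o v) :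
    Conn G o n u v := ⟨Walk.cons h Walk.nil, by simp [hu, hv]⟩

lemma Conn.mono {m : ℕ} (h : Conn G o n u v) (hm : m ≤ n) : Conn G o m u v := by
  obtain ⟨p, hp⟩ := h
  exact ⟨p, fun x hx => hm.trans (hp x hx)⟩

lemma Conn.le_left (h : Conn G o n u v) : n ≤ G.dist o u := by
  obtain ⟨p, hp⟩ := h
  exact hp u (by simp)

lemma Conn.le_right (h : Conn G o n u v) : n ≤ G.dist o v := h.symm.le_left

lemma Rel.refl : Rel G o v v := ⟨rfl, Conn.refl le_rfl⟩

lemma Rel.symm (h : Rel G o v w) : Rel G o w v := ⟨h.1.symm, h.1 ▸ h.2.symm⟩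

lemma Rel.trans (h : Rel G o u v) (h' : Rel G o v w) : Rel G o u w :=
  ⟨h.1.trans h'.1, h.2.trans (h.1 ▸ h'.2)⟩

lemma Small.congr (h : Small G o M v) (hr : Rel G o v w) : Small G o M w :=
  fun a b ha hb => h a b (hr.trans ha) (hr.trans hb)

/-- Three pairwise far points of a cluster contradict the tripod property. -/
lemma Tripod.rel (hT : Tripod G L) (h : Rel G o u v) (h' : Rel G o u w) :
    G.dist u v < L ∨ G.dist v w < L ∨ G.dist u w < L :=
  hT o _ u v w rfl h.1.symm h'.1.symm h.2 (h.2.symm.trans h'.2)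

/-- In a cluster of diameter more than `M`, distances are either less than `L` or greater than
`M - 2 * L`. -/
lemma gap (hG : G.Connected) (hT : Tripod G L) (hr : Rel G o u v) (hs : ¬ Small G o M u) :
    G.dist u v < L ∨ M < G.dist u v + 2 * L := by
  unfold Small at hs
  push Not at hs
  obtain ⟨x, y, hx, hy, hxy⟩ := hs
  have h1 := hT.rel hr hx
  have h2 := hT.rel hr hy
  have t1 := hG.dist_triangle (u := x) (v := u) (w := y)
  have t2 := hG.dist_triangle (u := x) (v := v) (w := y)
  have t3 := hG.dist_triangle (u := u) (v := v) (w := y)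
  have t4 := hG.dist_triangle (u := u) (v := x) (w := y)
  have t5 := hG.dist_triangle (u := v) (v := u) (w := y)
  rw [dist_comm (u := x) (v := u)] at *
  rw [dist_comm (u := x) (v := v)] at *
  rw [dist_comm (u := v) (v := u)] at *
  omega

/-- A walk from a point near `c` to a point far from `c` leaves the sphere of radius `r` about `c`
for a last time. -/
lemma exists_last_dist_eq (hG : G.Connected) (c : X) (r : ℕ) {u v : X} (p : G.Walk u v)
    (hu : ∃ x ∈ p.support, G.dist c x ≤ r) (hv : r ≤ G.dist c v) :
    ∃ z ∈ p.support, G.dist c z = r ∧ Conn G c r z v := by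
  induction p with
  | @nil u =>
    obtain ⟨x, hx, hxr⟩ := hu
    simp only [Walk.support_nil, List.mem_singleton] at hx
    subst hx
    exact ⟨x, by simp, le_antisymm hxr hv, Conn.refl hv⟩
  | @cons u w v h p ih =>
    by_cases hw : ∃ x ∈ p.support, G.dist c x ≤ r
    · obtain ⟨z, hz, h1, h2⟩ := ih hw hv
      exact ⟨z, by simp [hz], h1, h2⟩
    · push Not at hw
      obtain ⟨x, hx, hxr⟩ := hu
      have hxu : x = u := by
        rw [Walk.support_cons, List.mem_cons] at hx
        rcases hx with rfl | hx
        · rfl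
        · have := hw x hx; omega
      subst hxu
      have hdiff := hG.dist_triangle (u := c) (v := x) (w := w)
      rw [dist_eq_one_iff_adj.2 h] at hdiff
      have hw' := hw w (by simp)
      refine ⟨x, by simp, by omega, Walk.cons h p, ?_⟩
      intro y hy
      rw [Walk.support_cons, List.mem_cons] at hy
      rcases hy with rfl | hy
      · omega
      · exact (hw y hy).le

lemma exists_geodesic (hG : G.Connected) (u v : X) :
    ∃ p : G.Walk u v, ∀ z ∈ p.support, G.dist u z + G.dist z v = G.dist u v := by
  classical
  obtain ⟨p, hp⟩ := hG.exists_walk_length_eq_dist u v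
  refine ⟨p, fun z hz => ?_⟩
  have h1 := G.dist_le (p.takeUntil z hz)
  have h2 := G.dist_le (p.dropUntil z hz)
  have h3 := congrArg Walk.length (p.take_spec hz)
  rw [Walk.length_append] at h3
  have := hG.dist_triangle (u := u) (v := z) (w := v)
  omega

/-- `w` is a neighbour of `v` closer to the root. -/
def Down (G : SimpleGraph X) (o v w : X) : Prop := G.Adj v w ∧ G.dist o v = G.dist o w + 1

lemma exists_down (hG : G.Connected) (h : G.dist o v ≠ 0) : ∃ w, Down G o v w := by
  obtain ⟨p, hp⟩ := hG.exists_walk_length_eq_dist v o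
  rw [SimpleGraph.dist_comm] at hp
  cases p with
  | nil => exact absurd (by simp) h
  | @cons _ w _ hvw p =>
    refine ⟨w, hvw, ?_⟩
    rw [Walk.length_cons] at hp
    have h1 := G.dist_le p
    rw [SimpleGraph.dist_comm] at h1
    have h2 := hG.dist_triangle (u := o) (v := w) (w := v)
    rw [dist_eq_one_iff_adj.2 hvw.symm] at h2
    omega

lemma Rel.down {v' w' : X} (h : Rel G o v v') (hd : Down G o v w) (hd' : Down G o v' w') :
    Rel G o w w' := by
  have h1 := h.1
  have h2 := hd.2
  have h3 := hd'.2
  refine ⟨by omega, ?_⟩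
  have c1 : Conn G o (G.dist o w) w v := Conn.of_adj hd.1.symm le_rfl (by omega)
  have c2 : Conn G o (G.dist o w) v' w' := Conn.of_adj hd'.1 (by omega) (by omega)
  exact c1.trans ((h.2.mono (by omega)).trans c2)

/-- Two child clusters attached to the same two pieces of a large cluster coincide: otherwise,
walking from one piece to the other through either of them and through the root provides three
points on a sphere about the first piece that violate the tripod property. -/
lemma rel_of_link (hG : G.Connected) (hT : Tripod G L) (hM : 10 * L + 20 ≤ M)
    {v₁ v₁' v₂ v₂' w₁ w₁' w₂ w₂' : X} (h₁ : Down G o v₁ w₁) (h₁' : Down G o v₁' w₁')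
    (h₂ : Down G o v₂ w₂) (h₂' : Down G o v₂' w₂') (r₁ : Rel G o v₁ v₁') (r₂ : Rel G o v₂ v₂')
    (p : Piece G o M L w₁ w₂) (p' : Piece G o M L w₁' w₂') (hne : ¬ Piece G o M L w₁ w₁') :
    Rel G o v₁ v₂ := by
  by_contra hnot
  have rw₁ : Rel G o w₁ w₁' := r₁.down h₁ h₁'
  have hs : ¬ Small G o M w₁ := fun h => hne ⟨rw₁, Or.inr h⟩
  have hs' : ¬ Small G o M w₁' := fun h => hs (h.congr rw₁.symm)
  have hp : G.dist w₁ w₂ < L := p.2.resolve_right hs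
  have hp' : G.dist w₁' w₂' < L := p'.2.resolve_right hs'
  -- the two pieces of the cluster of `w₁` are far apart
  have hfar : M < G.dist w₁ w₁' + 2 * L :=
    (gap hG hT rw₁ hs).resolve_left fun h => hne ⟨rw₁, Or.inl h⟩
  have tri : ∀ a b c, G.dist a c ≤ G.dist a b + G.dist b c := fun a b c => hG.dist_triangle
  have com : ∀ a b, G.dist a b = G.dist b a := fun a b => dist_comm
  have one : ∀ {a b}, Down G o a b → G.dist a b = 1 := fun h => dist_eq_one_iff_adj.2 h.1
  have d₁ := one h₁
  have d₁' := one h₁'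
  have d₂ := one h₂
  have d₂' := one h₂'
  have e₁ := h₁.2
  have e₁' := h₁'.2
  have e₂ := h₂.2
  have e₂' := h₂'.2
  have f₁ := r₁.1
  have f₂ := r₂.1
  have f₃ := rw₁.1
  have f₄ := p.1.1
  -- three routes from near `w₁` to near `w₁'`: through either child cluster and through the root
  obtain ⟨q₁, hq₁⟩ := r₁.2
  obtain ⟨q₂, hq₂⟩ := r₂.2
  obtain ⟨q₃, hq₃⟩ := exists_geodesic hG w₁ o
  obtain ⟨q₄, hq₄⟩ := exists_geodesic hG o w₁'
  obtain ⟨q₅, hq₅⟩ := exists_geodesic hG w₂' w₁'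
  obtain ⟨z₁, hz₁, s₁, c₁⟩ := exists_last_dist_eq hG w₁ (2 * L + 2) q₁
    ⟨v₁, by simp, by have := com v₁ w₁; omega⟩
    (by have := tri w₁ v₁' w₁'; omega)
  obtain ⟨z₂, hz₂, s₂, c₂⟩ := exists_last_dist_eq hG w₁ (2 * L + 2) q₂
    ⟨v₂, by simp, by have := com v₂ w₂; have := tri w₁ w₂ v₂; omega⟩
    (by
      have := tri w₁ v₂' w₁'
      have := tri v₂' w₂' w₁'
      have := com w₁' w₂'
      omega)
  obtain ⟨z₃, hz₃, s₃, c₃⟩ := exists_last_dist_eq hG w₁ (2 * L + 2) (q₃.append q₄)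
    ⟨w₁, by simp, by simp⟩ (by omega)
  have k₁ : Conn G w₁ (2 * L + 2) v₁' w₁' :=
    Conn.of_adj h₁'.1 c₁.le_right c₃.le_right
  have k₂ : Conn G w₁ (2 * L + 2) w₂' w₁' := by
    refine ⟨q₅, fun z hz => ?_⟩
    have := hq₅ z hz
    have := tri w₁ z w₁'
    have := com w₁' w₂'
    omega
  have k₃ : Conn G w₁ (2 * L + 2) v₂' w₂' := Conn.of_adj h₂'.1 c₂.le_right k₂.le_left
  have o₁ := hq₁ z₁ hz₁
  have o₂ := hq₂ z₂ hz₂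
  have o₃ : G.dist o z₃ + (2 * L + 2) ≤ G.dist o w₁ := by
    rw [Walk.mem_support_append_iff] at hz₃
    rcases hz₃ with h | h
    · have := hq₃ _ h
      have := com z₃ o
      have := com w₁ o
      omega
    · have := hq₄ _ h
      have := tri w₁ z₃ w₁'
      omega
  have t₁ := tri o z₃ z₁
  have t₂ := tri o z₃ z₂
  have t₃ := com z₁ z₃
  have t₄ := com z₂ z₃
  have key := hT w₁ (2 * L + 2) z₁ z₂ z₃ s₁ s₂ s₃ ((c₁.trans k₁).trans
    ((c₂.trans k₃).trans k₂).symm) (((c₂.trans k₃).trans k₂).trans c₃.symm)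
  -- `z₃` lies `2 * L + 2` below `w₁`, hence it is far from `z₁` and `z₂`, which lie above `w₁`
  have hz₁₂ : G.dist z₁ z₂ < L := by omega
  classical
  have u₁ : Conn G o (G.dist o v₁) v₁ z₁ :=
    ⟨q₁.takeUntil z₁ hz₁, fun x hx => hq₁ x (q₁.support_takeUntil_subset_support hz₁ hx)⟩
  have u₂ : Conn G o (G.dist o v₂) v₂ z₂ :=
    ⟨q₂.takeUntil z₂ hz₂, fun x hx => hq₂ x (q₂.support_takeUntil_subset_support hz₂ hx)⟩
  have e₁₂ : G.dist o v₁ = G.dist o v₂ := by omega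
  obtain ⟨q, hq⟩ := exists_geodesic hG z₁ z₂
  -- a geodesic from `z₁` to `z₂` has to leave the part above the cluster of `v₁`; this happens at a
  -- third place of the cluster of `w₁`, far from both `w₁` and `w₁'`
  obtain ⟨d, hd, hd₁, hd₂⟩ := q.exists_boundary_dart {x | Conn G o (G.dist o v₁) v₁ x} u₁
    (fun h => hnot ⟨e₁₂, h.trans (e₁₂ ▸ u₂.symm)⟩)
  have hy := q.dart_fst_mem_support_of_mem_darts hd
  have hlow : G.dist o d.snd < G.dist o v₁ := by
    by_contra hcon
    exact hd₂ (Conn.trans hd₁ (Conn.of_adj d.adj (Conn.le_right hd₁) (not_lt.1 hcon)))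
  have hge : G.dist o v₁ ≤ G.dist o d.fst := Conn.le_right hd₁
  have ho := tri o d.snd d.fst
  rw [dist_eq_one_iff_adj.2 d.adj.symm] at ho
  have hrel : Rel G o v₁ d.fst := ⟨by omega, hd₁⟩
  obtain ⟨y, hyd⟩ := exists_down (o := o) (v := d.fst) hG (by omega)
  have hyr := hrel.down h₁ hyd
  have dy := one hyd
  have := hq _ hy
  have := tri w₁ d.fst z₁
  have := tri w₁ y d.fst
  have := com y d.fst
  have := com z₁ d.fst
  have := tri w₁' d.fst z₁
  have := tri w₁' y d.fst
  have := tri w₁ z₁ w₁'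
  have := com z₁ w₁'
  rcases hT.rel rw₁ hyr with h | h | h <;> omega

/-- Being in the same piece is an equivalence relation. -/
def pieceSetoid (hG : G.Connected) (hT : Tripod G L) (hL : 2 ≤ L) (hM : 10 * L + 20 ≤ M) (o : X) :
    Setoid X where
  r := Piece G o M L
  iseqv := by
    refine ⟨fun v => ⟨Rel.refl, Or.inl (by simp; omega)⟩, fun {v w} h => ⟨h.1.symm, ?_⟩,
      fun {u v w} h h' => ⟨h.1.trans h'.1, ?_⟩⟩
    · rcases h.2 with h2 | h2
      · left; rwa [dist_comm]
      · exact Or.inr (h2.congr h.1)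
    · by_cases hs : Small G o M u
      · exact Or.inr hs
      · left
        have h1 := h.2.resolve_right hs
        have h2 := h'.2.resolve_right fun hc => hs (hc.congr h.1.symm)
        rcases gap hG hT (h.1.trans h'.1) hs with h3 | h3
        · exact h3
        · have := hG.dist_triangle (u := u) (v := v) (w := w)
          omega

variable {hG : G.Connected} {hT : Tripod G L} {hL : 2 ≤ L} {hM : 10 * L + 20 ≤ M}

/-- The piece containing a vertex. -/
abbrev mk (hG : G.Connected) (hT : Tripod G L) (hL : 2 ≤ L) (hM : 10 * L + 20 ≤ M) (o v : X) :
    Quotient (pieceSetoid hG hT hL hM o) := Quotient.mk _ v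

lemma mk_eq : mk hG hT hL hM o v = mk hG hT hL hM o w ↔ Piece G o M L v w := Quotient.eq

/-- Two pieces belong to the same cluster. -/
def PRel (hG : G.Connected) (hT : Tripod G L) (hL : 2 ≤ L) (hM : 10 * L + 20 ≤ M) (o : X)
    (p q : Quotient (pieceSetoid hG hT hL hM o)) : Prop :=
  ∃ v w, mk hG hT hL hM o v = p ∧ mk hG hT hL hM o w = q ∧ Rel G o v w

/-- Some edge leads from the piece `p` down to the piece `q`. -/
def PDown (hG : G.Connected) (hT : Tripod G L) (hL : 2 ≤ L) (hM : 10 * L + 20 ≤ M) (o : X)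
    (p q : Quotient (pieceSetoid hG hT hL hM o)) : Prop :=
  ∃ v w, mk hG hT hL hM o v = p ∧ mk hG hT hL hM o w = q ∧ Down G o v w

lemma prel_mk : PRel hG hT hL hM o (mk hG hT hL hM o v) (mk hG hT hL hM o w) ↔ Rel G o v w := by
  constructor
  · rintro ⟨v', w', hv, hw, h⟩
    exact (mk_eq.1 hv).1.symm.trans (h.trans (mk_eq.1 hw).1)
  · intro h
    exact ⟨v, w, rfl, rfl, h⟩

lemma PDown.dist (h : PDown hG hT hL hM o (mk hG hT hL hM o v) (mk hG hT hL hM o w)) :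
    G.dist o v = G.dist o w + 1 := by
  obtain ⟨v', w', hv, hw, h⟩ := h
  rw [← (mk_eq.1 hv).1.1, ← (mk_eq.1 hw).1.1]
  exact h.2

/-- The graph whose vertices are the pieces, adjacent if joined by an edge. -/
def pieceGraph (hG : G.Connected) (hT : Tripod G L) (hL : 2 ≤ L) (hM : 10 * L + 20 ≤ M) (o : X) :
    SimpleGraph (Quotient (pieceSetoid hG hT hL hM o)) where
  Adj p q := PDown hG hT hL hM o p q ∨ PDown hG hT hL hM o q p
  symm := ⟨fun _ _ h => h.symm⟩
  loopless := ⟨by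
    rintro p
    induction p using Quotient.ind
    intro h
    have := h.elim PDown.dist PDown.dist
    omega⟩

lemma adj_or_eq (h : G.Adj v w) :
    (pieceGraph hG hT hL hM o).Adj (mk hG hT hL hM o v) (mk hG hT hL hM o w) ∨
      mk hG hT hL hM o v = mk hG hT hL hM o w := by
  have h1 := dist_eq_one_iff_adj.2 h
  have h2 := hG.dist_triangle (u := o) (v := v) (w := w)
  have h3 := hG.dist_triangle (u := o) (v := w) (w := v)
  rw [dist_comm (u := w) (v := v)] at h3
  rcases lt_trichotomy (G.dist o v) (G.dist o w) with hlt | heq | hlt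
  · exact Or.inl (Or.inr ⟨w, v, rfl, rfl, h.symm, by omega⟩)
  · exact Or.inr (mk_eq.2 ⟨⟨heq, Conn.of_adj h le_rfl heq.le⟩, Or.inl (by omega)⟩)
  · exact Or.inl (Or.inl ⟨v, w, rfl, rfl, h, by omega⟩)

lemma reachable_dist_le (p : G.Walk v w) :
    ∃ q : (pieceGraph hG hT hL hM o).Walk (mk hG hT hL hM o v) (mk hG hT hL hM o w),
      q.length ≤ p.length := by
  induction p with
  | nil => exact ⟨Walk.nil, by simp⟩
  | @cons u v w h p ih =>
    obtain ⟨q, hq⟩ := ih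
    rcases adj_or_eq (hG := hG) (hT := hT) (hL := hL) (hM := hM) (o := o) h with h' | h'
    · exact ⟨Walk.cons h' q, by simpa using hq⟩
    · exact ⟨q.copy h'.symm rfl, by simp; omega⟩

lemma pieceGraph_connected : (pieceGraph hG hT hL hM o).Connected := by
  rw [connected_iff]
  refine ⟨?_, ⟨mk hG hT hL hM o o⟩⟩
  intro p q
  induction p using Quotient.ind
  induction q using Quotient.ind
  rename_i v w
  obtain ⟨p, -⟩ := hG.exists_walk_length_eq_dist v w
  exact ⟨(reachable_dist_le p).choose⟩

lemma Piece.dist_le (hM : 10 * L + 20 ≤ M) (h : Piece G o M L v w) : G.dist v w ≤ M := by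
  rcases h.2 with h2 | h2
  · omega
  · exact h2 _ _ Rel.refl h.1

lemma dist_le_pieceGraph {p q : Quotient (pieceSetoid hG hT hL hM o)}
    (c : (pieceGraph hG hT hL hM o).Walk p q) :
    ∀ v w, mk hG hT hL hM o v = p → mk hG hT hL hM o w = q →
      G.dist v w ≤ (M + 1) * c.length + M := by
  induction c with
  | nil =>
    rintro v w rfl hw
    simpa using (mk_eq.1 hw.symm).dist_le hM
  | @cons p r q h c ih =>
    rintro v w rfl hw
    obtain ⟨a, b, ha, hb, hab⟩ : ∃ a b, mk hG hT hL hM o v = mk hG hT hL hM o a ∧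
        mk hG hT hL hM o b = r ∧ G.Adj a b := by
      rcases h with ⟨a, b, ha, hb, hd⟩ | ⟨a, b, ha, hb, hd⟩
      · exact ⟨a, b, ha.symm, hb, hd.1⟩
      · exact ⟨b, a, hb.symm, ha, hd.1.symm⟩
    have h1 := ih b w hb hw
    have h2 := (mk_eq.1 ha).dist_le hM
    have h3 := hG.dist_triangle (u := v) (v := a) (w := w)
    have h4 := hG.dist_triangle (u := a) (v := b) (w := w)
    have h5 := dist_eq_one_iff_adj.2 hab
    rw [Walk.length_cons]
    have : (M + 1) * (c.length + 1) = (M + 1) * c.length + (M + 1) := by ring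
    omega

/-- The pieces of the layering satisfy the cactus criterion; the cut belonging to a cluster separates
what is connected to it above its layer from the rest. -/
theorem clusterTree : ClusterTree (pieceGraph hG hT hL hM o) (PRel hG hT hL hM o)
    (PDown hG hT hL hM o) where
  equiv := by
    refine ⟨fun p => ?_, fun {p q} => ?_, fun {p q r} => ?_⟩
    · induction p using Quotient.ind; exact prel_mk.2 Rel.refl
    · induction p using Quotient.ind; induction q using Quotient.ind
      intro h; exact prel_mk.2 (prel_mk.1 h).symm
    · induction p using Quotient.ind; induction q using Quotient.ind
      induction r using Quotient.ind
      intro h h'; exact prel_mk.2 ((prel_mk.1 h).trans (prel_mk.1 h'))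
  adj_iff := fun _ _ => Iff.rfl
  asymm := by
    intro p q
    induction p using Quotient.ind; induction q using Quotient.ind
    intro h h'
    have := h.dist
    have := h'.dist
    omega
  parent := by
    rintro _ _ _ _ h ⟨v, w, rfl, rfl, hd⟩ ⟨v', w', rfl, rfl, hd'⟩
    exact prel_mk.2 ((prel_mk.1 h).down hd hd')
  le_two := by
    intro p q r
    induction p using Quotient.ind; induction q using Quotient.ind
    induction r using Quotient.ind
    intro h h'
    have h := prel_mk.1 h
    have h' := prel_mk.1 h'
    rcases hT.rel h h' with h1 | h1 | h1
    · exact Or.inl (mk_eq.2 ⟨h, Or.inl h1⟩)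
    · exact Or.inr (Or.inr (mk_eq.2 ⟨h.symm.trans h', Or.inl h1⟩))
    · exact Or.inr (Or.inl (mk_eq.2 ⟨h', Or.inl h1⟩))
  down_unique := by
    rintro _ a' _ _ h hne ⟨v, w, rfl, rfl, hd⟩ ⟨v', w', hv', rfl, hd'⟩
    induction a' using Quotient.ind
    rename_i a'
    have hr := prel_mk.1 h
    have hp := mk_eq.1 hv'
    have hs : ¬ Small G o M v := fun hs => hne (mk_eq.2 ⟨hr, Or.inr hs⟩)
    have hs' : ¬ Small G o M v' := fun hc => hs (hc.congr hp.1)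
    have h1 := hp.2.resolve_right hs'
    have hrw := hp.1.down hd' hd
    apply Eq.symm
    refine mk_eq.2 ⟨hrw, ?_⟩
    by_contra hcon
    push Not at hcon
    rcases gap hG hT hrw hcon.2 with h2 | h2
    · omega
    · have h3 := hG.dist_triangle (u := w') (v := v') (w := w)
      have h4 := hG.dist_triangle (u := v') (v := v) (w := w)
      have h5 := dist_eq_one_iff_adj.2 hd.1
      have h6 := dist_eq_one_iff_adj.2 hd'.1.symm
      omega
  link_unique := by
    rintro _ _ _ _ _ _ ⟨v₁, w₁, rfl, rfl, h₁⟩ ⟨v₁', w₁', rfl, rfl, h₁'⟩ ⟨v₂, w₂, rfl, hw₂, h₂⟩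
      ⟨v₂', w₂', rfl, hw₂', h₂'⟩ hne r₁ r₂
    exact prel_mk.2 (rel_of_link hG hT hM h₁ h₁' h₂ h₂' (prel_mk.1 r₁) (prel_mk.1 r₂)
      (mk_eq.1 hw₂.symm) (mk_eq.1 hw₂'.symm) (fun h => hne (mk_eq.2 h)))
  cut := by
    intro p
    induction p using Quotient.ind
    rename_i v
    have key : ∀ {w w'}, Piece G o M L w w' → Conn G o (G.dist o v) v w →
        Conn G o (G.dist o v) v w' := fun h hc => hc.trans (h.1.2.mono hc.le_right)
    refine ⟨{q | ∃ w, mk hG hT hL hM o w = q ∧ Conn G o (G.dist o v) v w}, ?_, ?_, ?_⟩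
    · intro q
      induction q using Quotient.ind
      rename_i w
      intro h
      exact ⟨w, rfl, (prel_mk.1 h).2⟩
    · rintro _ ⟨w, rfl, hw⟩ q hq hadj
      rcases hadj with ⟨a, b, ha, rfl, hd⟩ | ⟨b, a, rfl, ha, hd⟩
      · have hc := key (mk_eq.1 ha.symm) hw
        have hlt : G.dist o b < G.dist o v := by
          by_contra hcon
          exact hq ⟨b, rfl, hc.trans (Conn.of_adj hd.1 hc.le_right (not_lt.1 hcon))⟩
        have h1 := hd.2
        have h2 := hc.le_right
        have h3 := (mk_eq.1 ha).1.1
        exact ⟨prel_mk.2 ⟨by omega, hw⟩, ⟨a, b, ha, rfl, hd⟩⟩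
      · exfalso
        have hc := key (mk_eq.1 ha.symm) hw
        have h1 := hd.2
        have h2 := hc.le_right
        exact hq ⟨b, rfl, hc.trans (Conn.of_adj hd.1.symm hc.le_right (by omega))⟩
    · rintro q r hr ⟨a, b, rfl, rfl, hd⟩ ⟨w, hw, hc⟩
      have hc := key (mk_eq.1 hw) hc
      have h1 := hc.le_right
      have h2 := (prel_mk.1 hr).1
      have h3 := hd.2
      omega

/-- A connected graph with the tripod property is quasi-isometric to a cactus. -/
theorem exists_cactus {G : SimpleGraph X} (hG : G.Connected) {L : ℕ} (hT : Tripod G L) :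
    ∃ (V : Type) (H : SimpleGraph V) (f : X → V) (M : ℕ), IsCactus H ∧ Function.Surjective f ∧
      (∀ v w, H.dist (f v) (f w) ≤ G.dist v w) ∧
      (∀ v w, G.dist v w ≤ (M + 1) * H.dist (f v) (f w) + M) := by
  -- enlarging `L` puts adjacent vertices of a cluster into the same piece
  have hT' : Tripod G (L + 2) := by
    intro o n x y z hx hy hz h h'
    have := hT o n x y z hx hy hz h h'
    omega
  have hL : 2 ≤ L + 2 := by omega
  have hM : 10 * (L + 2) + 20 ≤ 10 * (L + 2) + 20 := le_rfl
  obtain ⟨o⟩ := hG.nonempty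
  refine ⟨_, pieceGraph hG hT' hL hM o, mk hG hT' hL hM o, 10 * (L + 2) + 20,
    clusterTree.isCactus pieceGraph_connected, Quotient.mk_surjective, ?_, ?_⟩
  · intro v w
    obtain ⟨p, hp⟩ := hG.exists_walk_length_eq_dist v w
    obtain ⟨q, hq⟩ := reachable_dist_le (hG := hG) (hT := hT') (hL := hL) (hM := hM) (o := o) p
    exact (dist_le q).trans (hq.trans hp.le)
  · intro v w
    obtain ⟨c, hc⟩ := pieceGraph_connected (hG := hG) (hT := hT') (hL := hL) (hM := hM)
      (o := o) |>.exists_walk_length_eq_dist (mk hG hT' hL hM o v) (mk hG hT' hL hM o w)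
    rw [← hc]
    exact dist_le_pieceGraph c v w rfl rfl

end Layer

/-! ### The unit graph of a length space -/

section UnitGraph

open Set

variable {X : Type*} [MetricSpace X]

/-- The graph on the points of `X` in which distinct points at distance at most `1` are adjacent. -/
def unitGraph (X : Type*) [MetricSpace X] : SimpleGraph X where
  Adj x y := x ≠ y ∧ dist x y ≤ 1
  symm := ⟨fun x y h => ⟨h.1.symm, by rw [dist_comm]; exact h.2⟩⟩
  loopless := ⟨fun _ h => h.1 rfl⟩

lemma dist_le_length {x y : X} (p : (unitGraph X).Walk x y) : dist x y ≤ p.length := by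
  induction p with
  | nil => simp
  | @cons u v w h p ih =>
    have := dist_triangle u v w
    rw [SimpleGraph.Walk.length_cons]
    push_cast
    linarith [h.2]

lemma IsLengthSpace.exists_walk (hX : IsLengthSpace X) {x y : X} {N : ℕ} (hN : dist x y < N) :
    ∃ p : (unitGraph X).Walk x y, p.length ≤ N := by
  obtain ⟨γ, ℓ, hγ, hℓ, rfl, rfl⟩ := hX.exists_lipCurve x y (sub_pos.2 hN)
  have hN0 : (0 : ℝ) < N := dist_nonneg.trans_lt hN
  have key : ∀ k : ℕ, ∃ p : (unitGraph X).Walk (γ 0) (γ (k / N)), p.length ≤ k := by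
    intro k
    induction k with
    | zero => exact ⟨SimpleGraph.Walk.nil.copy rfl (by simp), by simp⟩
    | succ k ih =>
      obtain ⟨p, hp⟩ := ih
      by_cases heq : γ (k / N) = γ ((k + 1 : ℕ) / N)
      · exact ⟨p.copy rfl heq, by simpa using hp.trans (Nat.le_succ k)⟩
      · have hd : dist (γ (k / N)) (γ ((k + 1 : ℕ) / N)) ≤ 1 := by
          refine (hγ _ _).trans ?_
          have : |(k : ℝ) / N - ((k + 1 : ℕ) : ℝ) / N| = 1 / N := by
            rw [← sub_div]
            push_cast
            rw [abs_div, abs_of_pos hN0]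
            norm_num
          rw [this, mul_one_div, div_le_one hN0]
          linarith
        have hadj : (unitGraph X).Adj (γ (k / N)) (γ ((k + 1 : ℕ) / N)) := ⟨heq, hd⟩
        exact ⟨p.concat hadj, by rw [SimpleGraph.Walk.length_concat]; omega⟩
  obtain ⟨p, hp⟩ := key N
  exact ⟨p.copy rfl (by rw [div_self hN0.ne']), by simpa using hp⟩

lemma IsLengthSpace.connected_unitGraph [Nonempty X] (hX : IsLengthSpace X) :
    (unitGraph X).Connected := by
  refine ⟨fun x y => ?_⟩
  obtain ⟨N, hN⟩ := exists_nat_gt (dist x y)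
  exact (hX.exists_walk hN).choose.reachable

lemma IsLengthSpace.dist_le_unitGraph [Nonempty X] (hX : IsLengthSpace X) (x y : X) :
    dist x y ≤ (unitGraph X).dist x y := by
  obtain ⟨p, hp⟩ := hX.connected_unitGraph.exists_walk_length_eq_dist x y
  rw [← hp]
  exact dist_le_length p

lemma IsLengthSpace.unitGraph_le_dist (hX : IsLengthSpace X) (x y : X) :
    ((unitGraph X).dist x y : ℝ) ≤ dist x y + 1 := by
  have hN : dist x y < (⌊dist x y⌋₊ + 1 : ℕ) := by
    push_cast
    exact Nat.lt_floor_add_one _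
  obtain ⟨p, hp⟩ := hX.exists_walk hN
  have h1 : ((unitGraph X).dist x y : ℝ) ≤ (⌊dist x y⌋₊ + 1 : ℕ) := by
    exact_mod_cast ((unitGraph X).dist_le p).trans hp
  push_cast at h1
  linarith [Nat.floor_le (dist_nonneg (x := x) (y := y))]

/-- A walk in the unit graph is shadowed by a compact connected subset of the space. -/
lemma IsLengthSpace.exists_shadow (hX : IsLengthSpace X) {x y : X} (p : (unitGraph X).Walk x y) :
    ∃ T : Set X, IsCompact T ∧ IsConnected T ∧ x ∈ T ∧ y ∈ T ∧
      ∀ z ∈ T, ∃ w ∈ p.support, dist w z ≤ 2 := by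
  induction p with
  | @nil u =>
    exact ⟨{u}, isCompact_singleton, isConnected_singleton, rfl, rfl, fun z hz =>
      ⟨u, by simp, by rw [mem_singleton_iff.1 hz, dist_self]; norm_num⟩⟩
  | @cons u v w h p ih =>
    obtain ⟨T, h1, h2, h3, h4, h5⟩ := ih
    obtain ⟨γ, ℓ, hγ, hℓ, h0, h1'⟩ := hX.exists_lipCurve u v one_pos
    have hv : v ∈ γ '' Icc 0 1 := ⟨1, by simp, h1'⟩
    refine ⟨γ '' Icc 0 1 ∪ T, (isCompact_Icc.image hγ.continuous).union h1, ?_,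
      Or.inl ⟨0, by simp, h0⟩, Or.inr h4, ?_⟩
    · exact IsConnected.union ⟨v, hv, h3⟩
        ((isConnected_Icc zero_le_one).image _ hγ.continuous.continuousOn) h2
    · rintro z (⟨t, ht, rfl⟩ | hz)
      · refine ⟨u, by simp, ?_⟩
        have := hγ 0 t
        rw [h0, zero_sub, abs_neg, abs_of_nonneg ht.1] at this
        have h2 := h.2
        nlinarith [ht.1, ht.2, hγ.nonneg]
      · obtain ⟨w', hw', hd⟩ := h5 z hz
        exact ⟨w', by simp [hw'], hd⟩

/-- Without a fat subdivision of `Θ`, the layers of the unit graph contain no long tripods. -/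
theorem IsLengthSpace.tripod {X : Type} [MetricSpace X] [Nonempty X] (hX : IsLengthSpace X)
    {W : Type*} {Θ' : SimpleGraph W} (hΘ : IsSubdivisionOf Θ' thetaGraph)
    (hno : ¬ HasAsymptoticMinor Θ' X) : ∃ L, Layer.Tripod (unitGraph X) L := by
  obtain ⟨a, b, m, g, hg⟩ := exists_thetaThreads hΘ
  unfold HasAsymptoticMinor at hno
  push Not at hno
  obtain ⟨K, hK, hno⟩ := hno
  obtain ⟨D, hD⟩ := exists_fat_theta hX hg hK
  -- distances in the unit graph exceed those of the space by at most `1`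
  obtain ⟨L, hL⟩ := exists_nat_ge (D + 1)
  refine ⟨L, fun o n x y z hx hy hz hxy hyz => ?_⟩
  by_contra hcon
  push Not at hcon
  obtain ⟨l1, l2, l3⟩ := hcon
  have hfar : ∀ u v : X, L ≤ (unitGraph X).dist u v → D ≤ dist u v := by
    intro u v h
    have h1 : (L : ℝ) ≤ (unitGraph X).dist u v := by exact_mod_cast h
    linarith [hX.unitGraph_le_dist u v]
  have hheight : ∀ u : X, (unitGraph X).dist o u = n →
      (n : ℝ) - 1 ≤ dist o u ∧ dist o u ≤ n := by
    intro u h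
    have h1 := hX.unitGraph_le_dist o u
    have h2 := hX.dist_le_unitGraph o u
    rw [h] at h1 h2
    exact ⟨by linarith, h2⟩
  obtain ⟨p, hp⟩ := hxy
  obtain ⟨q, hq⟩ := hyz
  obtain ⟨T, t1, t2, t3, t4, t5⟩ := hX.exists_shadow p
  obtain ⟨T', t1', t2', t3', t4', t5'⟩ := hX.exists_shadow q
  have hshadow : ∀ u v : X, n ≤ (unitGraph X).dist o u → dist u v ≤ 2 →
      (n : ℝ) - 3 ≤ dist o v := by
    intro u v h h'
    have h1 : (n : ℝ) ≤ (unitGraph X).dist o u := by exact_mod_cast h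
    have h2 := dist_triangle o v u
    rw [dist_comm v u] at h2
    linarith [hX.unitGraph_le_dist o u]
  refine hno (hD o ![x, y, z] (T ∪ T') n (t1.union t1') (IsConnected.union ⟨y, t4, t3'⟩ t2 t2')
    ?_ ?_ ?_ ?_)
  · intro i
    fin_cases i
    · exact Or.inl t3
    · exact Or.inl t4
    · exact Or.inr t4'
  · rintro v (hv | hv)
    · obtain ⟨w, hw, hd⟩ := t5 v hv
      exact hshadow w v (hp w hw) hd
    · obtain ⟨w, hw, hd⟩ := t5' v hv
      exact hshadow w v (hq w hw) hd
  · intro i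
    fin_cases i
    · exact hheight x hx
    · exact hheight y hy
    · exact hheight z hz
  · have e1 := hfar x y l1
    have e2 := hfar y z l2
    have e3 := hfar x z l3
    intro i j hij
    fin_cases i <;> fin_cases j <;> first
      | exact absurd rfl hij
      | assumption
      | (rw [dist_comm]; assumption)

end UnitGraph

/-! ### The equivalence -/

/-- A length space without a fat subdivision of `Θ` is quasi-isometric to a cactus. -/
theorem IsLengthSpace.exists_cactus {X : Type} [MetricSpace X] [Nonempty X]
    (hX : IsLengthSpace X) {W : Type} {Θ' : SimpleGraph W} (hΘ : IsSubdivisionOf Θ' thetaGraph)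
    (hno : ¬ HasAsymptoticMinor Θ' X) :
    ∃ (V : Type) (G : SimpleGraph V), IsCactus G ∧
      QuasiIsometric (fun x y : X => dist x y) (graphDist G) := by
  obtain ⟨L, hT⟩ := hX.tripod hΘ hno
  obtain ⟨V, H, f, M, hH, hf, h1, h2⟩ := Layer.exists_cactus hX.connected_unitGraph hT
  have hM : (0 : ℝ) ≤ M := Nat.cast_nonneg M
  refine ⟨V, H, hH, (M : ℝ) + 1, (M : ℝ) + 1, f, by linarith, by linarith, ?_, ?_, ?_⟩
  · intro x y
    have e1 := hX.dist_le_unitGraph x y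
    have e2 : ((unitGraph X).dist x y : ℝ) ≤ (M + 1) * H.dist (f x) (f y) + M := by
      exact_mod_cast h2 x y
    have e3 : ((M : ℝ) + 1)⁻¹ * dist x y ≤ H.dist (f x) (f y) + (M + 1) := by
      rw [inv_mul_le_iff₀ (by linarith)]
      nlinarith
    unfold graphDist
    linarith
  · intro x y
    have e1 := hX.unitGraph_le_dist x y
    have e2 : (H.dist (f x) (f y) : ℝ) ≤ (unitGraph X).dist x y := by exact_mod_cast h1 x y
    unfold graphDist
    nlinarith [dist_nonneg (x := x) (y := y)]
  · intro z
    obtain ⟨x, rfl⟩ := hf z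
    refine ⟨x, ?_⟩
    simp only [graphDist, SimpleGraph.dist_self, Nat.cast_zero]
    linarith

/-- The following are equivalent for a length space `X`:
(1) `X` is quasi-isometric to a cactus;
(2) `X` is quasi-isometric to an outerplanar graph;
(3) `X` has neither `K₄` nor `K_{2,3}` as an asymptotic minor;
(4) there is a subdivision `Θ'` of `Θ` such that `X` does not have `Θ'` as an asymptotic
minor. -/
theorem quasiCactus_tfae
    {X : Type} [MetricSpace X] [Nonempty X] (hX : IsLengthSpace X) :
    List.TFAE
      [ (∃ (V : Type) (G : SimpleGraph V), IsCactus G ∧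
          QuasiIsometric (fun x y : X => dist x y) (graphDist G)),
        (∃ (V : Type) (G : SimpleGraph V), G.Connected ∧ IsOuterplanar G ∧
          QuasiIsometric (fun x y : X => dist x y) (graphDist G)),
        (¬ HasAsymptoticMinor (⊤ : SimpleGraph (Fin 4)) X ∧
          ¬ HasAsymptoticMinor (completeBipartiteGraph (Fin 2) (Fin 3)) X),
        (∃ (W : Type) (Θ' : SimpleGraph W), IsSubdivisionOf Θ' thetaGraph ∧
          ¬ HasAsymptoticMinor Θ' X) ] := by
  tfae_have 1 → 2 := by
    rintro ⟨V, G, hG, h⟩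
    exact ⟨V, G, hG.1, hG.isOuterplanar, h⟩
  tfae_have 2 → 3 := by
    rintro ⟨V, G, hG, hout, M, A, f, hf⟩
    constructor
    · intro h
      obtain ⟨K, hK, hmin⟩ := isGraphMinor_of_fat (H := (⊤ : SimpleGraph (Fin 4))) hG hf
      exact hout.1 (hmin (h K hK))
    · intro h
      obtain ⟨K, hK, hmin⟩ :=
        isGraphMinor_of_fat (H := completeBipartiteGraph (Fin 2) (Fin 3)) hG hf
      exact hout.2 (hmin (h K hK))
  tfae_have 3 → 4 := fun h => ⟨_, _, isSubdivisionOf_bipartite, h.2⟩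
  tfae_have 4 → 1 := by
    rintro ⟨W, Θ', hΘ, hno⟩
    exact hX.exists_cactus hΘ hno
  tfae_finish
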